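/- arXiv:2006.15671 — 8 statements merged into one kernel-verified Lean document; each statement's English description precedes it below -/
import Mathlib

section
/- Fix 0 < ε < 1. There exists a constant C = C(ε) > 0 such that for every nonzero integer k, every integer q with |q| ≥ |k|^ε, and every real ρ ≥ 1, the number of integer divisors r of k satisfying |r − q| ≤ ρ is at most C·ρ^ε. -/
lemma dc_aux1 (ε : ℝ) (hε : 0 < ε) (p a : ℕ) (hp : 2 ≤ p) :
    ((a : ℝ) + 1) ≤ (1 + 1 / (ε * Real.log 2)) * ((p : ℝ) ^ a) ^ ε := by
  have hl : 0 < Real.log 2 := Real.log_pos (by norm_num)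
  have h2 : ((2 : ℝ) ^ a) ^ ε ≤ ((p : ℝ) ^ a) ^ ε := by
    have : (2 : ℝ) ≤ p := by exact_mod_cast hp
    gcongr
  have h3 : (a : ℝ) * (ε * Real.log 2) + 1 ≤ ((2 : ℝ) ^ a) ^ ε := by
    rw [Real.rpow_def_of_pos (by positivity), Real.log_pow]
    have := Real.add_one_le_exp ((a : ℝ) * Real.log 2 * ε)
    linarith
  have hx : 0 < ε * Real.log 2 := by positivity
  set x := ε * Real.log 2
  calc (a : ℝ) + 1 ≤ (1 + 1 / x) * (a * x + 1) := by
        have : (1 + 1 / x) * (a * x + 1) = a + 1 + a * x + 1 / x := by field_simp; ring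
        rw [this]
        have : 0 ≤ a * x + 1 / x := by positivity
        linarith
    _ ≤ _ := by
        have : 0 ≤ 1 + 1 / x := by positivity
        exact mul_le_mul_of_nonneg_left (h3.trans h2) this

lemma dc_aux2 (ε : ℝ) (p a : ℕ) (hp : (2 : ℝ) ≤ (p : ℝ) ^ ε) :
    ((a : ℝ) + 1) ≤ ((p : ℝ) ^ a) ^ ε := by
  have h : ((p : ℝ) ^ a) ^ ε = ((p : ℝ) ^ ε) ^ a := by
    rw [← Real.rpow_natCast, ← Real.rpow_natCast, ← Real.rpow_mul (by positivity),
      ← Real.rpow_mul (by positivity), mul_comm]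
  rw [h]
  have h2 : (2 : ℝ) ^ a ≤ ((p : ℝ) ^ ε) ^ a := by gcongr
  have h3 : ((a + 1 : ℕ) : ℝ) ≤ (2 : ℝ) ^ a := by
    exact_mod_cast Nat.lt_two_pow_self
  push_cast at h3
  linarith

lemma dc_tau (ε : ℝ) (hε : 0 < ε) :
    ∃ C > 0, ∀ n : ℕ, n ≠ 0 → (n.divisors.card : ℝ) ≤ C * (n : ℝ) ^ ε := by
  have hl : 0 < Real.log 2 := Real.log_pos (by norm_num)
  set A := 1 + 1 / (ε * Real.log 2) with hA
  have hA1 : 1 ≤ A := by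
    have : 0 ≤ 1 / (ε * Real.log 2) := by positivity
    linarith
  obtain ⟨P, hP⟩ := exists_nat_ge ((2 : ℝ) ^ (1 / ε))
  refine ⟨A ^ P, by positivity, fun n hn => ?_⟩
  have key : ∀ p ∈ n.primeFactors, ((n.factorization p : ℝ) + 1) ≤
      (if p < P then A else 1) * ((p : ℝ) ^ (n.factorization p)) ^ ε := by
    intro p hp
    have hp' := (Nat.prime_of_mem_primeFactors hp).two_le
    split_ifs with h
    · exact dc_aux1 ε hε p _ hp'
    · rw [one_mul]
      apply dc_aux2
      have : (2 : ℝ) ^ (1 / ε) ≤ p := hP.trans (by exact_mod_cast not_lt.mp h)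
      calc (2 : ℝ) = ((2 : ℝ) ^ (1 / ε)) ^ ε := by
            rw [← Real.rpow_mul (by norm_num), one_div_mul_cancel hε.ne', Real.rpow_one]
        _ ≤ _ := by gcongr
  have e1 : (n.divisors.card : ℝ) = ∏ p ∈ n.primeFactors, ((n.factorization p : ℝ) + 1) := by
    rw [Nat.card_divisors hn]; push_cast; rfl
  have e2 : (n : ℝ) ^ ε = ∏ p ∈ n.primeFactors, ((p : ℝ) ^ (n.factorization p)) ^ ε := by
    rw [Real.finsetProd_rpow _ _ (fun i _ => by positivity)]
    congr 1
    conv_lhs => rw [← Nat.prod_factorization_pow_eq_self hn]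
    rw [Finsupp.prod]; push_cast; rfl
  rw [e1, e2]
  refine (Finset.prod_le_prod (fun i _ => by positivity) key).trans ?_
  rw [Finset.prod_mul_distrib]
  refine mul_le_mul_of_nonneg_right ?_ (Finset.prod_nonneg fun i _ => by positivity)
  rw [Finset.prod_ite, Finset.prod_const, Finset.prod_const_one, mul_one]
  apply pow_le_pow_right₀ hA1
  calc _ ≤ (Finset.range P).card := Finset.card_le_card (fun x hx => by simp at hx ⊢; exact hx.2)
    _ = P := Finset.card_range P

lemma dc_gcd_prod (a : ℕ) (S : Finset ℤ) :
    Nat.gcd a (∏ s ∈ S, s.natAbs) ∣ ∏ s ∈ S, Nat.gcd a s.natAbs := by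
  induction S using Finset.induction_on with
  | empty => simp
  | insert b S hb ih =>
    rw [Finset.prod_insert hb, Finset.prod_insert hb]
    exact (Nat.gcd_mul_right_dvd_mul_gcd _ _ _).trans (mul_dvd_mul_left _ ih)

lemma dc_lcm (G : ℝ) (hG : 1 ≤ G) (S : Finset ℤ) (h0 : ∀ s ∈ S, s ≠ 0)
    (hS : ∀ s ∈ S, ∀ t ∈ S, s ≠ t → (Nat.gcd s.natAbs t.natAbs : ℝ) ≤ G) :
    ∏ s ∈ S, (s.natAbs : ℝ) ≤ (S.lcm Int.natAbs : ℕ) * G ^ (S.card ^ 2) := by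
  induction S using Finset.induction_on with
  | empty => simp
  | insert b S hb ih =>
    have ih' := ih (fun s hs => h0 s (Finset.mem_insert_of_mem hs))
      (fun s hs t ht => hS s (Finset.mem_insert_of_mem hs) t (Finset.mem_insert_of_mem ht))
    rw [Finset.prod_insert hb, Finset.lcm_insert, Finset.card_insert_of_notMem hb]
    set L := S.lcm Int.natAbs
    have hL : L ∣ ∏ s ∈ S, s.natAbs :=
      Finset.lcm_dvd fun s hs => Finset.dvd_prod_of_mem _ hs
    have hg : ((Nat.gcd b.natAbs L : ℕ) : ℝ) ≤ G ^ S.card := by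
      have hd : Nat.gcd b.natAbs L ∣ ∏ s ∈ S, Nat.gcd b.natAbs s.natAbs :=
        (Nat.gcd_dvd_gcd_of_dvd_right _ hL).trans (dc_gcd_prod _ _)
      have hb0 : b.natAbs ≠ 0 := by simpa using h0 b (Finset.mem_insert_self _ _)
      have hle := Nat.le_of_dvd (Finset.prod_pos fun s _ =>
        Nat.gcd_pos_of_pos_left _ (Nat.pos_of_ne_zero hb0)) hd
      calc ((Nat.gcd b.natAbs L : ℕ) : ℝ) ≤ ((∏ s ∈ S, Nat.gcd b.natAbs s.natAbs : ℕ) : ℝ) := by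
            exact_mod_cast hle
        _ = ∏ s ∈ S, ((Nat.gcd b.natAbs s.natAbs : ℕ) : ℝ) := by push_cast; rfl
        _ ≤ ∏ s ∈ S, G := Finset.prod_le_prod (fun _ _ => by positivity) fun s hs =>
            hS b (Finset.mem_insert_self _ _) s (Finset.mem_insert_of_mem hs)
              (fun h => hb (h ▸ hs))
        _ = _ := by rw [Finset.prod_const]
    have e : (b.natAbs : ℝ) * L = (Nat.gcd b.natAbs L : ℕ) * (Nat.lcm b.natAbs L : ℕ) := by
      exact_mod_cast (Nat.gcd_mul_lcm b.natAbs L).symm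
    calc (b.natAbs : ℝ) * ∏ s ∈ S, (s.natAbs : ℝ) ≤ b.natAbs * (L * G ^ (S.card ^ 2)) := by gcongr
      _ = (Nat.gcd b.natAbs L : ℕ) * (Nat.lcm b.natAbs L : ℕ) * G ^ (S.card ^ 2) := by
          rw [← e]; ring
      _ ≤ G ^ S.card * (Nat.lcm b.natAbs L : ℕ) * G ^ (S.card ^ 2) := by gcongr
      _ = (Nat.lcm b.natAbs L : ℕ) * G ^ (S.card + S.card ^ 2) := by ring
      _ ≤ (Nat.lcm b.natAbs L : ℕ) * G ^ ((S.card + 1) ^ 2) := by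
          gcongr
          · nlinarith
      _ = _ := rfl

lemma dc_all (k : ℤ) (hk : k ≠ 0) : {r : ℤ | r ∣ k}.Finite ∧
    {r : ℤ | r ∣ k}.ncard ≤ 2 * k.natAbs.divisors.card := by
  classical
  set T : Finset ℤ := k.natAbs.divisors.image (fun n : ℕ => (n : ℤ)) ∪
    k.natAbs.divisors.image (fun n : ℕ => -(n : ℤ)) with hT
  have hsub : {r : ℤ | r ∣ k} ⊆ (T : Set ℤ) := by
    intro r hr
    have h1 : r.natAbs ∈ k.natAbs.divisors := by
      rw [Nat.mem_divisors]
      exact ⟨Int.natAbs_dvd_natAbs.mpr hr, by simpa using hk⟩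
    rw [hT, Finset.mem_coe, Finset.mem_union, Finset.mem_image, Finset.mem_image]
    rcases Int.natAbs_eq r with h | h
    · exact Or.inl ⟨_, h1, h.symm⟩
    · exact Or.inr ⟨_, h1, h.symm⟩
  refine ⟨T.finite_toSet.subset hsub, ?_⟩
  calc _ ≤ (T : Set ℤ).ncard := Set.ncard_le_ncard hsub T.finite_toSet
    _ = T.card := Set.ncard_coe_finset T
    _ ≤ _ := Finset.card_union_le _ _
    _ ≤ k.natAbs.divisors.card + k.natAbs.divisors.card :=
        add_le_add Finset.card_image_le Finset.card_image_le
    _ = _ := by ring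

lemma dc_small (ε : ℝ) (hε0 : 0 < ε) (hε1 : ε < 1) (m : ℕ) (hm : 3 ≤ m * ε) (k : ℤ) (hk : k ≠ 0)
    (q : ℤ) (hq : (|k| : ℝ) ^ ε ≤ (|q| : ℝ)) (ρ : ℝ) (hρ : 1 ≤ ρ)
    (hK : (2 : ℝ) ^ (m + m ^ 2) < |(k : ℝ)|) (hρ2 : ρ < |(k : ℝ)| ^ (1 / (m : ℝ) ^ 2))
    (S : Finset ℤ) (hS : ∀ r ∈ S, r ∣ k ∧ (|r - q| : ℝ) ≤ ρ) (hc : S.card = m) : False := by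
  set K := |(k : ℝ)| with hKdef
  have hm3 : (3 : ℝ) ≤ m := by nlinarith
  have hK1 : 1 ≤ K := (one_le_pow₀ (by norm_num)).trans hK.le
  have hK0 : 0 < K := by linarith
  set δ := 1 / (m : ℝ) ^ 2 with hδ
  have hδε : δ ≤ ε / 2 := by
    rw [hδ, div_le_iff₀ (by positivity)]; nlinarith
  have hhalf : 2 ≤ K ^ (ε / 2) := by
    have h1 : (2 : ℝ) ^ m ≤ K :=
      (pow_le_pow_right₀ (by norm_num) (by omega)).trans hK.le
    calc (2 : ℝ) = (2 : ℝ) ^ (1 : ℝ) := by simp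
      _ ≤ (2 : ℝ) ^ ((m : ℝ) * (ε / 2)) := by
          apply Real.rpow_le_rpow_of_exponent_le (by norm_num); linarith
      _ = ((2 : ℝ) ^ m) ^ (ε / 2) := by rw [Real.rpow_mul (by norm_num), Real.rpow_natCast]
      _ ≤ _ := by gcongr
  have hρ3 : ρ ≤ K ^ ε / 2 := by
    have h1 : K ^ δ ≤ K ^ (ε / 2) := Real.rpow_le_rpow_of_exponent_le hK1 hδε
    have h2 : K ^ ε = K ^ (ε / 2) * K ^ (ε / 2) := by rw [← Real.rpow_add hK0]; congr 1; ring
    nlinarith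
  have hr0 : ∀ r ∈ S, r ≠ 0 := fun r hr h => hk (by simpa [h] using (hS r hr).1)
  have hlow : ∀ r ∈ S, K ^ ε / 2 ≤ (r.natAbs : ℝ) := by
    intro r hr
    have h1 := (hS r hr).2
    rw [Nat.cast_natAbs, Int.cast_abs]
    have h2 := abs_sub_abs_le_abs_sub (q : ℝ) r
    rw [abs_sub_comm] at h2
    linarith
  have hgcd : ∀ s ∈ S, ∀ t ∈ S, s ≠ t → (Nat.gcd s.natAbs t.natAbs : ℝ) ≤ 2 * ρ := by
    intro s hs t ht hst
    have hd : ((Int.gcd s t : ℕ) : ℤ) ∣ s - t := dvd_sub (Int.gcd_dvd_left ..) (Int.gcd_dvd_right ..)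
    have hle : ((Int.gcd s t : ℕ) : ℤ) ≤ |s - t| :=
      Int.le_of_dvd (abs_pos.mpr (sub_ne_zero.mpr hst)) ((dvd_abs _ _).mpr hd)
    have hle' : ((Int.gcd s t : ℕ) : ℝ) ≤ |(s : ℝ) - t| := by exact_mod_cast hle
    have h1 := (hS s hs).2
    have h2 := (hS t ht).2
    have h3 := abs_sub_le (s : ℝ) q t
    rw [abs_sub_comm (q : ℝ) t] at h3
    have : Nat.gcd s.natAbs t.natAbs = Int.gcd s t := rfl
    rw [this]; linarith
  have hmain := dc_lcm (2 * ρ) (by linarith) S hr0 hgcd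
  have hlcm : ((S.lcm Int.natAbs : ℕ) : ℝ) ≤ K := by
    have h1 : S.lcm Int.natAbs ∣ k.natAbs :=
      Finset.lcm_dvd fun r hr => Int.natAbs_dvd_natAbs.mpr (hS r hr).1
    have h2 := Nat.le_of_dvd (Int.natAbs_pos.mpr hk) h1
    have h3 : (k.natAbs : ℝ) = K := by rw [Nat.cast_natAbs, Int.cast_abs]
    rw [← h3]; exact_mod_cast h2
  have hprod : (K ^ ε / 2) ^ m ≤ ∏ s ∈ S, (s.natAbs : ℝ) := by
    rw [← hc, ← Finset.prod_const]
    exact Finset.prod_le_prod (fun _ _ => by positivity) hlow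
  rw [hc] at hmain
  have hpw : (2 * ρ) ^ (m ^ 2) ≤ 2 ^ (m ^ 2) * K := by
    rw [mul_pow]
    gcongr
    calc ρ ^ (m ^ 2) ≤ (K ^ δ) ^ (m ^ 2) := by gcongr
      _ = K := by
        rw [← Real.rpow_natCast, ← Real.rpow_mul hK0.le, hδ]
        push_cast
        rw [one_div_mul_cancel (by positivity), Real.rpow_one]
  have h3 : K ^ 3 ≤ (K ^ ε) ^ m := by
    rw [← Real.rpow_natCast, ← Real.rpow_natCast, ← Real.rpow_mul hK0.le]
    apply Real.rpow_le_rpow_of_exponent_le hK1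
    push_cast; linarith
  have h4 : (K ^ ε / 2) ^ m ≤ K * (2 ^ (m ^ 2) * K) :=
    hprod.trans (hmain.trans (by gcongr))
  rw [div_pow, div_le_iff₀ (by positivity)] at h4
  have h5 : K ^ 3 ≤ 2 ^ (m + m ^ 2) * K ^ 2 := by
    refine h3.trans (h4.trans (le_of_eq ?_)); ring
  have h6 : 2 ^ (m + m ^ 2) * K ^ 2 < K * K ^ 2 := by gcongr
  nlinarith


/-- Divisor counting lemma (Lemma 2.2, adapted from Deng–Nahmod–Yue): for `0 < ε < 1` there is a
constant `C = C(ε)` such that for every nonzero integer `k`, every integer `q` with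
`|q| ≥ |k|^ε`, and every `ρ ≥ 1`, the number of integer divisors `r` of `k` with `|r − q| ≤ ρ`
is at most `C ρ^ε`. -/
theorem divisor_counting (ε : ℝ) (hε0 : 0 < ε) (hε1 : ε < 1) :
    ∃ C > 0, ∀ k : ℤ, k ≠ 0 → ∀ q : ℤ, (|k| : ℝ) ^ ε ≤ (|q| : ℝ) → ∀ ρ : ℝ, 1 ≤ ρ →
      {r : ℤ | r ∣ k ∧ (|r - q| : ℝ) ≤ ρ}.Finite ∧
      ({r : ℤ | r ∣ k ∧ (|r - q| : ℝ) ≤ ρ}.ncard : ℝ) ≤ C * ρ ^ ε := by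
  obtain ⟨m, hm⟩ := exists_nat_ge (3 / ε)
  rw [div_le_iff₀ hε0] at hm
  have hm3 : (3 : ℝ) ≤ m := by nlinarith
  set δ := 1 / (m : ℝ) ^ 2 with hδ
  have hδ0 : 0 < δ := by positivity
  obtain ⟨C1, hC1, hτ⟩ := dc_tau (δ * ε) (by positivity)
  refine ⟨2 * 2 ^ (m + m ^ 2) + 2 * C1 + m, by positivity, fun k hk q hq ρ hρ => ?_⟩
  obtain ⟨hfin, hcard⟩ := dc_all k hk
  have hsub : {r : ℤ | r ∣ k ∧ (|r - q| : ℝ) ≤ ρ} ⊆ {r : ℤ | r ∣ k} := fun r hr => hr.1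
  have hfin' := hfin.subset hsub
  refine ⟨hfin', ?_⟩
  have hle : ({r : ℤ | r ∣ k ∧ (|r - q| : ℝ) ≤ ρ}.ncard : ℝ) ≤ 2 * k.natAbs.divisors.card := by
    exact_mod_cast (Set.ncard_le_ncard hsub hfin).trans hcard
  have hρε : 1 ≤ ρ ^ ε := Real.one_le_rpow hρ hε0.le
  have hkK : (k.natAbs : ℝ) = |(k : ℝ)| := by rw [Nat.cast_natAbs, Int.cast_abs]
  have hp : (0 : ℝ) < 2 ^ (m + m ^ 2) := by positivity
  rcases le_or_gt |(k : ℝ)| (2 ^ (m + m ^ 2)) with hK | hK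
  · have h1 : (k.natAbs.divisors.card : ℝ) ≤ k.natAbs := by
      exact_mod_cast Nat.card_divisors_le_self _
    have h2 : 2 * (2 : ℝ) ^ (m + m ^ 2) ≤ 2 * 2 ^ (m + m ^ 2) * ρ ^ ε :=
      le_mul_of_one_le_right (by positivity) hρε
    have h3 : 0 ≤ (2 * C1 + m) * ρ ^ ε := by positivity
    linarith
  rcases le_or_gt (|(k : ℝ)| ^ δ) ρ with hr | hr
  · have h1 := hτ k.natAbs (by simpa using hk)
    rw [hkK, Real.rpow_mul (abs_nonneg _)] at h1
    have h2 : (|(k : ℝ)| ^ δ) ^ ε ≤ ρ ^ ε := by gcongr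
    have h3 : C1 * (|(k : ℝ)| ^ δ) ^ ε ≤ C1 * ρ ^ ε := by gcongr
    have h4 : 0 ≤ (2 * 2 ^ (m + m ^ 2) + m) * ρ ^ ε := by positivity
    linarith
  · have hlt : {r : ℤ | r ∣ k ∧ (|r - q| : ℝ) ≤ ρ}.ncard ≤ m := by
      by_contra! hcon
      rw [Set.ncard_eq_toFinset_card _ hfin'] at hcon
      obtain ⟨S, hS, hc⟩ := Finset.exists_subset_card_eq hcon.le
      exact dc_small ε hε0 hε1 m hm k hk q hq ρ hρ hK hr S
        (fun r hr => by simpa using hS hr) hc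
    have hlt' : ({r : ℤ | r ∣ k ∧ (|r - q| : ℝ) ≤ ρ}.ncard : ℝ) ≤ m := by exact_mod_cast hlt
    have h2 : (m : ℝ) ≤ m * ρ ^ ε := le_mul_of_one_le_right (by positivity) hρε
    have h4 : 0 ≤ (2 * 2 ^ (m + m ^ 2) + 2 * C1) * ρ ^ ε := by positivity
    linarith
end

section
/- Let 0 ≤ α ≤ β be reals with α + β > 1 and let ε > 0. Define γ = α + β − 1 if β < 1, γ = α − ε if β = 1, and γ = α if β > 1. Then there exists a constant C > 0 such that for all a, b ∈ ℝ: ∫_ℝ (1+(x−a)²)^{−α/2} (1+(x−b)²)^{−β/2} dx ≤ C·(1+(a−b)²)^{−γ/2}. -/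
open MeasureTheory

lemma cl_pw {A B p q : ℝ} (hA : 1 ≤ A) (hB : 1 ≤ B) (hpq : p ≤ q) :
    A ^ (-p) * B ^ (-q) ≤ (max A B) ^ (-p) * (min A B) ^ (-q) := by
  rcases le_total A B with h | h
  · rw [max_eq_right h, min_eq_left h]
    have hA0 : 0 < A := by linarith
    have hB0 : 0 < B := by linarith
    have h1 : A ^ (-p) = A ^ (-q) * A ^ (q - p) := by
      rw [← Real.rpow_add hA0]; congr 1; ring
    have h2 : B ^ (-p) = B ^ (-q) * B ^ (q - p) := by
      rw [← Real.rpow_add hB0]; congr 1; ring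
    have h3 : A ^ (q - p) ≤ B ^ (q - p) := Real.rpow_le_rpow hA0.le h (by linarith)
    have h4 : 0 ≤ A ^ (-q) * B ^ (-q) := by positivity
    rw [h1, h2]
    nlinarith [mul_le_mul_of_nonneg_left h3 h4]
  · rw [max_eq_left h, min_eq_right h]

lemma cl_main {p q a b : ℝ} (hpq : p ≤ q) (f : ℝ → ℝ) (hf : Integrable f)
    (hf0 : ∀ y, 0 ≤ f y)
    (h : ∀ y M : ℝ, y ≠ 0 → 1 + y ^ 2 ≤ M → 1 + (a - b) ^ 2 ≤ 4 * M →
      M ^ (-p) * (1 + y ^ 2) ^ (-q) ≤ f y) :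
    (∫ x : ℝ, (1 + (x - a) ^ 2) ^ (-p) * (1 + (x - b) ^ 2) ^ (-q)) ≤ 2 * ∫ y, f y := by
  have h1 := hf.comp_sub_right a
  have h2 := hf.comp_sub_right b
  have e : 2 * ∫ y, f y = ∫ x, (f (x - a) + f (x - b)) := by
    rw [integral_add h1 h2, integral_sub_right_eq_self, integral_sub_right_eq_self]; ring
  rw [e]
  apply integral_mono_of_nonneg
  · exact Filter.Eventually.of_forall fun x => by
      show 0 ≤ _
      positivity
  · exact h1.add h2
  · have ha : ∀ᵐ x : ℝ, x ≠ a := by simp [ae_iff]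
    have hb : ∀ᵐ x : ℝ, x ≠ b := by simp [ae_iff]
    filter_upwards [ha, hb] with x hxa hxb
    have hA : 1 ≤ 1 + (x - a) ^ 2 := by nlinarith [sq_nonneg (x - a)]
    have hB : 1 ≤ 1 + (x - b) ^ 2 := by nlinarith [sq_nonneg (x - b)]
    refine (cl_pw hA hB hpq).trans ?_
    rcases le_total (1 + (x - a) ^ 2) (1 + (x - b) ^ 2) with hh | hh
    · rw [max_eq_right hh, min_eq_left hh]
      have := h (x - a) (1 + (x - b) ^ 2) (sub_ne_zero.2 hxa) hh
        (by nlinarith [sq_nonneg ((x - a) + (x - b))])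
      linarith [hf0 (x - b)]
    · rw [max_eq_left hh, min_eq_right hh]
      have := h (x - b) (1 + (x - a) ^ 2) (sub_ne_zero.2 hxb) hh
        (by nlinarith [sq_nonneg ((x - a) + (x - b))])
      linarith [hf0 (x - a)]

lemma cl_int {r : ℝ} (hr : 1 / 2 < r) : Integrable (fun x : ℝ => (1 + x ^ 2) ^ (-r)) := by
  have := integrable_rpow_neg_one_add_norm_sq (E := ℝ) (μ := volume) (r := 2 * r)
    (by simp; linarith)
  convert this using 2 with x
  rw [Real.norm_eq_abs, sq_abs]; congr 1; ring

/-- pointwise-interpolation case -/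
lemma cl_case1 {p q s r : ℝ} (hpq : p ≤ q) (hs : 0 ≤ s) (hsp : s ≤ p) (hr : r = q + (p - s))
    (hr2 : 1 / 2 < r) : ∃ C > 0, ∀ a b : ℝ,
      (∫ x : ℝ, (1 + (x - a) ^ 2) ^ (-p) * (1 + (x - b) ^ 2) ^ (-q)) ≤
        C * (1 + (a - b) ^ 2) ^ (-s) := by
  have hI : 0 ≤ ∫ x : ℝ, (1 + x ^ 2) ^ (-r) := integral_nonneg fun x => by
    show 0 ≤ _
    positivity
  refine ⟨2 * 4 ^ s * (∫ x : ℝ, (1 + x ^ 2) ^ (-r)) + 1, by positivity, fun a b => ?_⟩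
  have hD : 0 < 1 + (a - b) ^ 2 := by positivity
  have := cl_main (a := a) (b := b) hpq
    (fun y => (4 ^ s * (1 + (a - b) ^ 2) ^ (-s)) * (1 + y ^ 2) ^ (-r))
    ((cl_int hr2).const_mul _) (fun y => by positivity) (fun y M hy hM hM2 => by
      have hy0 : 0 < 1 + y ^ 2 := by positivity
      have hM0 : 0 < M := by linarith
      have e1 : M ^ (-p) = M ^ (-s) * M ^ (-(p - s)) := by
        rw [← Real.rpow_add hM0]; congr 1; ring
      have e2 : (1 + y ^ 2) ^ (-r) = (1 + y ^ 2) ^ (-(p - s)) * (1 + y ^ 2) ^ (-q) := by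
        rw [← Real.rpow_add hy0, hr]; congr 1; ring
      have e3 : M ^ (-s) ≤ 4 ^ s * (1 + (a - b) ^ 2) ^ (-s) := by
        have : M ^ (-s) = 4 ^ s * (4 * M) ^ (-s) := by
          rw [Real.mul_rpow (by norm_num) hM0.le, ← mul_assoc, ← Real.rpow_add (by norm_num)]
          simp
        rw [this]
        gcongr ?_ * ?_
        exact Real.rpow_le_rpow_of_nonpos hD hM2 (by linarith)
      have e4 : M ^ (-(p - s)) ≤ (1 + y ^ 2) ^ (-(p - s)) :=
        Real.rpow_le_rpow_of_nonpos hy0 hM (by linarith)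
      show _ ≤ (4 ^ s * (1 + (a - b) ^ 2) ^ (-s)) * (1 + y ^ 2) ^ (-r)
      rw [e1, e2, ← mul_assoc]
      gcongr)
  rw [integral_const_mul] at this
  have h0 : 0 ≤ (1 + (a - b) ^ 2) ^ (-s) := by positivity
  nlinarith

lemma cl_g_int {α β : ℝ} (hα : 0 ≤ α) (hβ : β < 1) (hs : 1 < α + β) :
    Integrable (fun t : ℝ => (|t| + 1) ^ (-α) * |t| ^ (-β)) := by
  have hm : Measurable (fun t : ℝ => (|t| + 1) ^ (-α) * |t| ^ (-β)) := by
    have : Measurable (fun t : ℝ => |t|) := measurable_norm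
    exact ((this.add_const 1).pow_const _).mul (this.pow_const _)
  have h1 : IntegrableOn (fun t : ℝ => (|t| + 1) ^ (-α) * |t| ^ (-β)) (Set.Ioc 0 1) := by
    have : IntegrableOn (fun t : ℝ => t ^ (-β)) (Set.Ioc 0 1) :=
      (intervalIntegrable_iff_integrableOn_Ioc_of_le zero_le_one).1
        (intervalIntegral.intervalIntegrable_rpow' (by linarith))
    refine Integrable.mono' this hm.aestronglyMeasurable ?_
    filter_upwards [ae_restrict_mem measurableSet_Ioc] with t ht
    rw [Real.norm_of_nonneg (by positivity), abs_of_pos ht.1]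
    have := Real.rpow_le_one_of_one_le_of_nonpos (x := t + 1) (z := -α)
      (by linarith [ht.1]) (by linarith)
    have h0 : 0 ≤ t ^ (-β) := Real.rpow_nonneg ht.1.le _
    nlinarith
  have h2 : IntegrableOn (fun t : ℝ => (|t| + 1) ^ (-α) * |t| ^ (-β)) (Set.Ioi 1) := by
    have := integrableOn_Ioi_rpow_of_lt (a := -α + -β) (c := 1) (by linarith) one_pos
    refine Integrable.mono' this hm.aestronglyMeasurable ?_
    filter_upwards [ae_restrict_mem measurableSet_Ioi] with t ht
    have ht0 : 0 < t := lt_trans one_pos ht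
    rw [Real.norm_of_nonneg (by positivity), abs_of_pos ht0, Real.rpow_add ht0]
    gcongr ?_ * _
    exact Real.rpow_le_rpow_of_nonpos ht0 (by linarith) (by linarith)
  have h3 := h1.union h2
  rw [Set.Ioc_union_Ioi_eq_Ioi zero_le_one] at h3
  have h4 := (integrable_indicator_iff measurableSet_Ioi).2 h3
  refine (h4.add h4.comp_neg).congr ?_
  have ha : ∀ᵐ x : ℝ, x ≠ 0 := by simp [ae_iff]
  filter_upwards [ha] with x hx
  rcases lt_or_gt_of_ne hx with h | h
  · simp [Set.indicator, h, h.le]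
  · simp [Set.indicator, h, h.le]

lemma cl_case2 {α β : ℝ} (hα : 0 ≤ α) (hαβ : α ≤ β) (hβ : β < 1) (hs : 1 < α + β) :
    ∃ C > 0, ∀ a b : ℝ,
      (∫ x : ℝ, (1 + (x - a) ^ 2) ^ (-(α / 2)) * (1 + (x - b) ^ 2) ^ (-(β / 2))) ≤
        C * (1 + (a - b) ^ 2) ^ (-((α + β - 1) / 2)) := by
  have hg := cl_g_int hα hβ hs
  set g : ℝ → ℝ := fun t : ℝ => (|t| + 1) ^ (-α) * |t| ^ (-β) with hgdef
  have hg0 : ∀ t, 0 ≤ g t := fun t => by rw [hgdef]; positivity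
  have hI : 0 ≤ ∫ x : ℝ, g x := integral_nonneg hg0
  refine ⟨2 * 10 ^ (α / 2) * (∫ x : ℝ, g x) + 1, by positivity, fun a b => ?_⟩
  have hD : 0 < 1 + (a - b) ^ 2 := by positivity
  obtain ⟨s, hs0, hsD⟩ : ∃ s : ℝ, 0 < s ∧ s ^ 2 = 1 + (a - b) ^ 2 :=
    ⟨Real.sqrt _, Real.sqrt_pos.2 hD, Real.sq_sqrt hD.le⟩
  have key : ∀ z w : ℝ, 0 ≤ z → (z ^ 2) ^ (-(w / 2)) = z ^ (-w) := fun z w hz => by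
    rw [← Real.rpow_natCast, ← Real.rpow_mul hz]; congr 1; push_cast; ring
  have := cl_main (a := a) (b := b) (p := α / 2) (q := β / 2) (by linarith)
    (fun y => (10 ^ (α / 2) * s ^ (-α + -β)) * g (y / s))
    ((hg.comp_div hs0.ne').const_mul _)
    (fun y => mul_nonneg (by positivity) (hg0 _)) (fun y M hy hM hM2 => by
      have hM0 : 0 < M := by nlinarith [sq_nonneg y]
      have hy0 : 0 < |y| := abs_pos.2 hy
      have e1 : M ^ (-(α / 2)) ≤ 10 ^ (α / 2) * (|y| + s) ^ (-α) := by
        have : M ^ (-(α / 2)) = 10 ^ (α / 2) * (10 * M) ^ (-(α / 2)) := by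
          rw [Real.mul_rpow (by norm_num) hM0.le, ← mul_assoc, ← Real.rpow_add (by norm_num)]
          simp
        rw [this, ← key (|y| + s) α (by positivity)]
        gcongr ?_ * ?_
        refine Real.rpow_le_rpow_of_nonpos (by positivity) ?_ (by linarith)
        nlinarith [sq_nonneg (|y| - s), sq_abs y]
      have e2 : (1 + y ^ 2) ^ (-(β / 2)) ≤ |y| ^ (-β) := by
        rw [← key |y| β hy0.le, sq_abs]
        exact Real.rpow_le_rpow_of_nonpos (by positivity) (by linarith) (by linarith)
      have e3 : |y| = s * |y / s| := by
        rw [abs_div, abs_of_pos hs0]; field_simp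
      have e4 : (|y| + s) ^ (-α) = s ^ (-α) * (|y / s| + 1) ^ (-α) := by
        rw [← Real.mul_rpow hs0.le (by positivity)]; congr 1; rw [mul_add, ← e3]; ring
      have e5 : |y| ^ (-β) = s ^ (-β) * |y / s| ^ (-β) := by
        rw [← Real.mul_rpow hs0.le (by positivity), ← e3]
      calc _ ≤ (10 ^ (α / 2) * (|y| + s) ^ (-α)) * |y| ^ (-β) := by gcongr
        _ = _ := by rw [e4, e5, Real.rpow_add hs0, hgdef]; ring)
  rw [integral_const_mul, Measure.integral_comp_div, smul_eq_mul, abs_of_pos hs0] at this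
  have e6 : (1 + (a - b) ^ 2) ^ (-((α + β - 1) / 2)) = s ^ (-α + -β) * s := by
    rw [← hsD, key s _ hs0.le]
    nth_rewrite 3 [← Real.rpow_one s]
    rw [← Real.rpow_add hs0]; congr 1; ring
  rw [e6]
  have h0 : 0 ≤ s ^ (-α + -β) * s := by positivity
  nlinarith


/-- The standard convolution lemma (Lemma 2.3):
`∫_ℝ ⟨x−a⟩^{−α}⟨x−b⟩^{−β} dx ≲ ⟨a−b⟩^{−γ}` with `γ = α+β−1` if `β < 1`, `γ = α−ε` if `β = 1`,
and `γ = α` if `β > 1`. -/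
theorem convolution_lemma (α β ε γ : ℝ) (hα : 0 ≤ α) (hαβ : α ≤ β) (hsum : 1 < α + β)
    (hε : 0 < ε)
    (hγ : γ = if β < 1 then α + β - 1 else if β = 1 then α - ε else α) :
    ∃ C > 0, ∀ a b : ℝ,
      (∫ x : ℝ, (1 + (x - a) ^ 2) ^ (-(α / 2)) * (1 + (x - b) ^ 2) ^ (-(β / 2))) ≤
        C * (1 + (a - b) ^ 2) ^ (-(γ / 2)) := by
  rcases lt_trichotomy β 1 with h | h | h
  · rw [if_pos h] at hγ
    subst hγ
    exact cl_case2 hα hαβ h hsum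
  · rw [if_neg (by linarith), if_pos h] at hγ
    obtain ⟨C, hC, H⟩ := cl_case1 (p := α / 2) (q := β / 2) (s := (α - min ε α) / 2)
      (r := β / 2 + (α / 2 - (α - min ε α) / 2)) (by linarith)
      (by linarith [min_le_right ε α])
      (by linarith [le_min hε.le hα]) rfl
      (by linarith [lt_min hε (show 0 < α by linarith)])
    refine ⟨C, hC, fun a b => (H a b).trans ?_⟩
    gcongr ?_ * ?_
    apply Real.rpow_le_rpow_of_exponent_le
    · nlinarith [sq_nonneg (a - b)]
    · rw [hγ]; linarith [min_le_left ε α]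
  · rw [if_neg (by linarith), if_neg h.ne'] at hγ
    subst hγ
    exact cl_case1 (r := β / 2) (by linarith) (by linarith) le_rfl (by ring) (by linarith)
end

section
/- Let g be a Schwartz function on ℝ. For τ, λ ∈ ℝ define K(τ,λ) := ∫_ℝ g(μ−λ)·(g(τ−μ) − g(τ))/μ dμ (the integral converges absolutely). Then: (i) for every real α ≥ 2 there exists C_α > 0 such that |K(τ,λ)| ≤ C_α·(⟨τ−λ⟩^{−α} + ⟨τ⟩^{−α})·⟨λ⟩^{−1} for all τ, λ ∈ ℝ; and (ii) there exists C > 0 such that |K(τ,λ)| ≤ C·⟨τ⟩^{−1}·⟨τ−λ⟩^{−1} for all τ, λ ∈ ℝ. -/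
open MeasureTheory

lemma w_peetre (x y : ℝ) : 1 + (x + y) ^ 2 ≤ 2 * (1 + x ^ 2) * (1 + y ^ 2) := by
  nlinarith [sq_nonneg (x - y), sq_nonneg (x * y)]

lemma w_rpow_neg (a : ℝ) (ha : 0 ≤ a) (u v p : ℝ) (hu : 0 < u) (hv : 0 < v) (hp : 0 < p)
    (h : u ≤ p * v) : v ^ (-a) ≤ p ^ a * u ^ (-a) := by
  have h1 : u ^ a ≤ p ^ a * v ^ a := by
    rw [← Real.mul_rpow hp.le hv.le]
    exact Real.rpow_le_rpow hu.le h ha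
  rw [Real.rpow_neg hv.le, Real.rpow_neg hu.le]
  have h2 : 0 < u ^ a := Real.rpow_pos_of_pos hu a
  have h3 : 0 < v ^ a := Real.rpow_pos_of_pos hv a
  rw [← div_eq_mul_inv, inv_eq_one_div, div_le_div_iff₀ h3 h2]
  linarith

lemma w_decay (f : SchwartzMap ℝ ℂ) (a : ℝ) :
    ∃ C > 0, ∀ x : ℝ, ‖f x‖ ≤ C * (1 + x ^ 2) ^ (-a) := by
  obtain ⟨n, hn⟩ := exists_nat_ge a
  refine ⟨2 ^ (2 * n) * ((Finset.Iic (2 * n, 0)).sup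
    (schwartzSeminormFamily ℝ ℝ ℂ)) f + 1, by positivity, fun x => ?_⟩
  have h := SchwartzMap.one_add_le_sup_seminorm_apply (𝕜 := ℝ) (m := (2 * n, 0)) (k := 2 * n)
    (n := 0) le_rfl le_rfl f x
  simp only [norm_iteratedFDeriv_zero] at h
  set D := 2 ^ (2 * n) * ((Finset.Iic (2 * n, 0)).sup
    (schwartzSeminormFamily ℝ ℝ ℂ)) f
  have hw : 0 < 1 + x ^ 2 := by positivity
  rw [Real.rpow_neg hw.le, ← div_eq_mul_inv, le_div_iff₀ (Real.rpow_pos_of_pos hw a)]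
  have h1 : (1 + x ^ 2) ^ a ≤ (1 + ‖x‖) ^ (2 * n) := by
    calc (1 + x ^ 2) ^ a ≤ (1 + x ^ 2) ^ (n : ℝ) :=
          Real.rpow_le_rpow_of_exponent_le (by nlinarith [sq_nonneg x]) hn
      _ = (1 + x ^ 2) ^ n := Real.rpow_natCast _ _
      _ ≤ ((1 + ‖x‖) ^ 2) ^ n := by
          apply pow_le_pow_left₀ hw.le
          rw [Real.norm_eq_abs]
          nlinarith [abs_nonneg x, sq_abs x]
      _ = _ := by rw [pow_mul]
  calc ‖f x‖ * (1 + x ^ 2) ^ a ≤ ‖f x‖ * (1 + ‖x‖) ^ (2 * n) := by gcongr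
    _ ≤ D := by rw [mul_comm]; exact h
    _ ≤ D + 1 := by linarith

lemma w_quot (g : SchwartzMap ℝ ℂ) (a : ℝ) (ha : 0 ≤ a) :
    ∃ C > 0, ∀ τ μ : ℝ, ‖(g (τ - μ) - g τ) / (μ : ℂ)‖ ≤
      C * ((1 + (τ - μ) ^ 2) ^ (-a) + (1 + τ ^ 2) ^ (-a)) * (Real.sqrt (1 + μ ^ 2))⁻¹ := by
  obtain ⟨C0, hC0, h0⟩ := w_decay g a
  obtain ⟨C1, hC1, h1⟩ := w_decay (SchwartzMap.derivCLM ℝ ℂ g) a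
  refine ⟨2 * C0 + 2 * (C1 * 4 ^ a), by positivity, fun τ μ => ?_⟩
  have hA : 0 < (1 + (τ - μ) ^ 2) ^ (-a) := Real.rpow_pos_of_pos (by positivity) _
  have hB : 0 < (1 + τ ^ 2) ^ (-a) := Real.rpow_pos_of_pos (by positivity) _
  set A := (1 + (τ - μ) ^ 2) ^ (-a)
  set B := (1 + τ ^ 2) ^ (-a) with hBdef
  have h4 : (0 : ℝ) < 4 ^ a := Real.rpow_pos_of_pos (by norm_num) _
  have hs : 0 < Real.sqrt (1 + μ ^ 2) := by positivity
  rw [norm_div, Complex.norm_real, Real.norm_eq_abs]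
  rcases le_total |μ| 1 with hμ | hμ
  · have hd : ‖g (τ - μ) - g τ‖ ≤ (C1 * (4 ^ a * B)) * ‖(τ - μ) - τ‖ := by
      apply (convex_uIcc τ (τ - μ)).norm_image_sub_le_of_norm_deriv_le (f := g) (𝕜 := ℝ)
      · intro x _; exact g.differentiableAt
      · intro x hx
        have := h1 x
        rw [SchwartzMap.derivCLM_apply] at this
        refine this.trans ?_
        gcongr
        apply w_rpow_neg a ha _ _ _ (by positivity) (by positivity) (by norm_num)
        have h5 : |x - τ| ≤ 1 := by
          have := Set.abs_sub_left_of_mem_uIcc hx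
          refine this.trans ?_
          simpa using hμ
        have h6 := w_peetre (τ - x) x
        have h7 : (τ - x) ^ 2 ≤ 1 := by
          rw [abs_le] at h5; nlinarith
        have h8 : τ - x + x = τ := by ring
        rw [h8] at h6
        nlinarith [sq_nonneg x]
      · exact Set.left_mem_uIcc
      · exact Set.right_mem_uIcc
    have hn : ‖(τ - μ) - τ‖ = |μ| := by
      rw [Real.norm_eq_abs, show τ - μ - τ = -μ by ring, abs_neg]
    rw [hn] at hd
    have h9 : ‖g (τ - μ) - g τ‖ / |μ| ≤ C1 * (4 ^ a * B) :=
      div_le_of_le_mul₀ (abs_nonneg _) (by positivity) hd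
    refine h9.trans ?_
    rw [← div_eq_mul_inv, le_div_iff₀ hs]
    have h10 : Real.sqrt (1 + μ ^ 2) ≤ 2 := by
      rw [Real.sqrt_le_left (by norm_num)]
      nlinarith [sq_abs μ, abs_nonneg μ]
    calc C1 * (4 ^ a * B) * Real.sqrt (1 + μ ^ 2) ≤ C1 * (4 ^ a * B) * 2 := by gcongr
      _ = (0 + 2 * (C1 * 4 ^ a)) * (0 + B) := by ring
      _ ≤ _ := by gcongr; positivity
  · have hm : 0 < |μ| := by linarith
    have hd : ‖g (τ - μ) - g τ‖ ≤ C0 * (A + B) := by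
      calc _ ≤ _ := norm_sub_le _ _
        _ ≤ C0 * A + C0 * B := add_le_add (h0 _) (h0 _)
        _ = _ := by ring
    rw [← div_eq_mul_inv, div_le_div_iff₀ hm hs]
    have h10 : Real.sqrt (1 + μ ^ 2) ≤ 2 * |μ| := by
      rw [Real.sqrt_le_left (by positivity)]
      nlinarith [sq_abs μ, abs_nonneg μ]
    calc _ ≤ (C0 * (A + B)) * (2 * |μ|) := by gcongr
      _ = (2 * C0 + 0) * (A + B) * |μ| := by ring
      _ ≤ _ := by gcongr; positivity

lemma w_sqrt (u v p : ℝ) (hu : 0 < u) (hv : 0 < v) (hp : 1 ≤ p)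
    (h : u ≤ p * v) : (Real.sqrt v)⁻¹ ≤ p * (Real.sqrt u)⁻¹ := by
  have h1 : Real.sqrt u ≤ p * Real.sqrt v := by
    rw [Real.sqrt_le_left (by positivity), mul_pow, Real.sq_sqrt hv.le]
    nlinarith
  rw [← div_eq_mul_inv, inv_eq_one_div, div_le_div_iff₀ (by positivity) (by positivity)]
  linarith

lemma kernel_one (g : SchwartzMap ℝ ℂ) (α : ℝ) (hα : 2 ≤ α) : ∃ C > 0, ∀ τ lam : ℝ,
      ‖∫ μ : ℝ, g (μ - lam) * (g (τ - μ) - g τ) / (μ : ℂ)‖ ≤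
        C * (((1 + (τ - lam) ^ 2) ^ (-(α / 2)) + (1 + τ ^ 2) ^ (-(α / 2))) *
          (Real.sqrt (1 + lam ^ 2))⁻¹) := by
  obtain ⟨a, rfl⟩ : ∃ a, α = 2 * a := ⟨α / 2, by ring⟩
  rw [show 2 * a / 2 = a by ring]
  have ha : 0 ≤ a := by linarith
  obtain ⟨C1, hC1, h1⟩ := w_quot g a ha
  obtain ⟨C0, hC0, h0⟩ := w_decay g (a + 2)
  refine ⟨C0 * C1 * 2 ^ a * 2 * Real.pi, by positivity, fun τ lam => ?_⟩
  have hA : 0 < (1 + (τ - lam) ^ 2) ^ (-a) := Real.rpow_pos_of_pos (by positivity) _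
  have hB : 0 < (1 + τ ^ 2) ^ (-a) := Real.rpow_pos_of_pos (by positivity) _
  set A := (1 + (τ - lam) ^ 2) ^ (-a)
  set B := (1 + τ ^ 2) ^ (-a)
  set L := (Real.sqrt (1 + lam ^ 2))⁻¹ with hL
  have hLpos : 0 < L := by positivity
  have hint : Integrable (fun μ : ℝ =>
      (C0 * C1 * 2 ^ a * 2 * ((A + B) * L)) * (1 + (μ - lam) ^ 2)⁻¹) :=
    (integrable_inv_one_add_sq.comp_sub_right lam).const_mul _
  refine (norm_integral_le_of_norm_le hint (Filter.Eventually.of_forall fun μ => ?_)).trans ?_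
  · rw [mul_div_assoc, norm_mul]
    have hp : 1 ≤ 1 + (μ - lam) ^ 2 := by nlinarith [sq_nonneg (μ - lam)]
    have e1 : (1 + (τ - μ) ^ 2) ^ (-a) ≤ (2 * (1 + (μ - lam) ^ 2)) ^ a * A := by
      apply w_rpow_neg a ha _ _ _ (by positivity) (by positivity) (by positivity)
      have := w_peetre (μ - lam) (τ - μ)
      rwa [show μ - lam + (τ - μ) = τ - lam by ring] at this
    have e2 : B ≤ (2 * (1 + (μ - lam) ^ 2)) ^ a * B := by
      apply w_rpow_neg a ha _ _ _ (by positivity) (by positivity) (by positivity)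
      nlinarith [sq_nonneg τ]
    have e3 : (Real.sqrt (1 + μ ^ 2))⁻¹ ≤ 2 * (1 + (μ - lam) ^ 2) * L := by
      apply w_sqrt _ _ _ (by positivity) (by positivity) (by linarith)
      have := w_peetre (lam - μ) μ
      rw [show lam - μ + μ = lam by ring] at this
      convert this using 3
      ring
    have e4 := h0 (μ - lam)
    have e5 := h1 τ μ
    set p := 1 + (μ - lam) ^ 2
    have hp0 : 0 < p := by linarith
    have hq : 0 < p ^ a := Real.rpow_pos_of_pos hp0 a
    rw [Real.mul_rpow (by norm_num) hp0.le] at e1 e2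
    have e6 : p ^ (-(a + 2)) = (p ^ a)⁻¹ * (p ^ 2)⁻¹ := by
      rw [Real.rpow_neg hp0.le, Real.rpow_add hp0, mul_inv, Real.rpow_two]
    calc _ ≤ (C0 * p ^ (-(a + 2))) *
          (C1 * (2 ^ a * p ^ a * A + 2 ^ a * p ^ a * B) * (2 * p * L)) := by
          refine mul_le_mul e4 (e5.trans ?_) (norm_nonneg _) (by positivity)
          gcongr
      _ = _ := by
          rw [e6]
          field_simp
  · rw [integral_const_mul, integral_sub_right_eq_self (fun x : ℝ => (1 + x ^ 2)⁻¹),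
      integral_univ_inv_one_add_sq]
    apply le_of_eq
    ring

/-- Proposition 3.1: the kernel `K(τ,λ) = ∫ g(μ−λ)(g(τ−μ)−g(τ))/μ dμ` of the truncated Duhamel
operator satisfies `|K(τ,λ)| ≲_α (⟨τ−λ⟩^{−α} + ⟨τ⟩^{−α})⟨λ⟩^{−1}` for every `α ≥ 2`, and
`|K(τ,λ)| ≲ ⟨τ⟩^{−1}⟨τ−λ⟩^{−1}`. -/
theorem duhamel_kernel_estimate (g : SchwartzMap ℝ ℂ) :
    (∀ α : ℝ, 2 ≤ α → ∃ C > 0, ∀ τ lam : ℝ,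
      ‖∫ μ : ℝ, g (μ - lam) * (g (τ - μ) - g τ) / (μ : ℂ)‖ ≤
        C * (((1 + (τ - lam) ^ 2) ^ (-(α / 2)) + (1 + τ ^ 2) ^ (-(α / 2))) *
          (Real.sqrt (1 + lam ^ 2))⁻¹)) ∧
    (∃ C > 0, ∀ τ lam : ℝ,
      ‖∫ μ : ℝ, g (μ - lam) * (g (τ - μ) - g τ) / (μ : ℂ)‖ ≤
        C * (Real.sqrt (1 + τ ^ 2))⁻¹ * (Real.sqrt (1 + (τ - lam) ^ 2))⁻¹) := by
  refine ⟨fun α hα => kernel_one g α hα, ?_⟩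
  obtain ⟨C, hC, h⟩ := kernel_one g 2 le_rfl
  refine ⟨4 * C, by positivity, fun τ lam => (h τ lam).trans ?_⟩
  have s1 : Real.sqrt (1 + τ ^ 2) ≤ 2 * (Real.sqrt (1 + lam ^ 2) * Real.sqrt (1 + (τ - lam) ^ 2)) := by
    rw [Real.sqrt_le_left (by positivity), mul_pow, mul_pow, Real.sq_sqrt (by positivity),
      Real.sq_sqrt (by positivity)]
    have := w_peetre lam (τ - lam)
    rw [show lam + (τ - lam) = τ by ring] at this
    nlinarith [mul_nonneg (add_nonneg zero_le_one (sq_nonneg lam)) (add_nonneg zero_le_one (sq_nonneg (τ - lam)))]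
  have s2 : Real.sqrt (1 + (τ - lam) ^ 2) ≤ 2 * (Real.sqrt (1 + lam ^ 2) * Real.sqrt (1 + τ ^ 2)) := by
    rw [Real.sqrt_le_left (by positivity), mul_pow, mul_pow, Real.sq_sqrt (by positivity),
      Real.sq_sqrt (by positivity)]
    have := w_peetre (-lam) τ
    rw [show -lam + τ = τ - lam by ring, neg_sq] at this
    nlinarith [mul_nonneg (add_nonneg zero_le_one (sq_nonneg lam)) (add_nonneg zero_le_one (sq_nonneg τ))]
  have k : ∀ x : ℝ, (1 + x ^ 2) ^ (-((2 : ℝ) / 2)) = (Real.sqrt (1 + x ^ 2) ^ 2)⁻¹ := by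
    intro x
    rw [Real.sq_sqrt (by positivity), div_self (by norm_num), Real.rpow_neg_one]
  rw [k, k]
  have t1 : 0 < Real.sqrt (1 + τ ^ 2) := by positivity
  have t2 : 0 < Real.sqrt (1 + lam ^ 2) := by positivity
  have t3 : 0 < Real.sqrt (1 + (τ - lam) ^ 2) := by positivity
  set x := Real.sqrt (1 + τ ^ 2)
  set y := Real.sqrt (1 + lam ^ 2)
  set z := Real.sqrt (1 + (τ - lam) ^ 2)
  have r1 : (z ^ 2)⁻¹ * y⁻¹ ≤ 2 * (x⁻¹ * z⁻¹) := by
    calc (z ^ 2)⁻¹ * y⁻¹ = x * ((z ^ 2)⁻¹ * y⁻¹ * x⁻¹) := by field_simp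
      _ ≤ (2 * (y * z)) * ((z ^ 2)⁻¹ * y⁻¹ * x⁻¹) := by gcongr
      _ = _ := by field_simp
  have r2 : (x ^ 2)⁻¹ * y⁻¹ ≤ 2 * (x⁻¹ * z⁻¹) := by
    calc (x ^ 2)⁻¹ * y⁻¹ = z * ((x ^ 2)⁻¹ * y⁻¹ * z⁻¹) := by field_simp
      _ ≤ (2 * (y * x)) * ((x ^ 2)⁻¹ * y⁻¹ * z⁻¹) := by gcongr
      _ = _ := by field_simp
  calc C * (((z ^ 2)⁻¹ + (x ^ 2)⁻¹) * y⁻¹) = C * ((z ^ 2)⁻¹ * y⁻¹ + (x ^ 2)⁻¹ * y⁻¹) := by ring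
    _ ≤ C * (2 * (x⁻¹ * z⁻¹) + 2 * (x⁻¹ * z⁻¹)) := by gcongr
    _ = _ := by ring
end

section
/- Let g be a Schwartz function on ℝ with g(−1) = 0. There exists a constant C > 0 such that for every μ ∈ ℝ and every nonzero integer Φ: |(1/Φ)·g(μ/Φ)| ≤ C·⟨μ+Φ⟩·min(⟨Φ⟩^{−1}, ⟨μ⟩^{−1})². -/
lemma schwartz_key (g : SchwartzMap ℝ ℂ) (hg : g (-1) = 0) :
    ∃ K > 0, ∀ x : ℝ, (1 + x ^ 2) * ‖g x‖ ≤ K * |x + 1| := by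
  obtain ⟨A, hA, hA'⟩ := g.decay 0 1
  obtain ⟨B, hB, hB'⟩ := g.decay 0 0
  obtain ⟨D, hD, hD'⟩ := g.decay 2 0
  refine ⟨5 * A + B + D, by positivity, fun x => ?_⟩
  have h0 := hB' x
  have h2 := hD' x
  simp only [norm_iteratedFDeriv_zero, pow_zero, one_mul, Real.norm_eq_abs, sq_abs] at h0 h2
  have h1 : ‖g x‖ ≤ A * |x + 1| := by
    have := Convex.norm_image_sub_le_of_norm_deriv_le (𝕜 := ℝ) (f := g) (s := Set.univ) (C := A)
      (x := -1) (y := x) (fun y _ => g.differentiable y) (fun y _ => by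
        have := hA' y
        rw [norm_iteratedFDeriv_eq_norm_iteratedDeriv, iteratedDeriv_one] at this
        simpa using this) convex_univ trivial trivial
    simpa [hg] using this
  have hn := norm_nonneg (g x)
  have ha := abs_nonneg (x + 1)
  rcases le_total |x + 1| 1 with h | h
  · have h5 : 1 + x ^ 2 ≤ 5 := by
      have := abs_le.1 h
      nlinarith
    calc (1 + x ^ 2) * ‖g x‖ ≤ 5 * (A * |x + 1|) := by gcongr
      _ ≤ _ := by nlinarith [mul_nonneg hB.le ha, mul_nonneg hD.le ha]
  · calc (1 + x ^ 2) * ‖g x‖ ≤ (B + D) * 1 := by linarith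
      _ ≤ (5 * A + B + D) * |x + 1| := by
        gcongr
        linarith

/-- The pointwise bound on `(1/Φ)·η̂(μ/Φ)` for a Schwartz function `g = η̂` with `g(−1) = 0`,
used in the proof of Proposition 3.3:
`|(1/Φ) g(μ/Φ)| ≲ ⟨μ+Φ⟩ min(⟨Φ⟩^{−1}, ⟨μ⟩^{−1})²`. -/
theorem schwartz_rescaled_bound (g : SchwartzMap ℝ ℂ) (hg : g (-1) = 0) :
    ∃ C > 0, ∀ (μ : ℝ) (Φ : ℤ), Φ ≠ 0 →
      ‖(1 / (Φ : ℂ)) * g (μ / (Φ : ℝ))‖ ≤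
        C * Real.sqrt (1 + (μ + (Φ : ℝ)) ^ 2) *
          (min (Real.sqrt (1 + (Φ : ℝ) ^ 2))⁻¹ (Real.sqrt (1 + μ ^ 2))⁻¹) ^ 2 := by
  obtain ⟨K, hK, hk⟩ := schwartz_key g hg
  refine ⟨2 * K, by positivity, fun μ Φ hΦ => ?_⟩
  have hF0 : (Φ : ℝ) ≠ 0 := by exact_mod_cast hΦ
  have hF1 : (1 : ℝ) ≤ |(Φ : ℝ)| := by exact_mod_cast Int.one_le_abs hΦ
  have hnorm : ‖(1 / (Φ : ℂ)) * g (μ / (Φ : ℝ))‖ = ‖g (μ / (Φ : ℝ))‖ / |(Φ : ℝ)| := by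
    rw [norm_mul, norm_div, Complex.norm_intCast, norm_one]
    ring
  rw [hnorm]
  obtain ⟨x, hx⟩ : ∃ x, x = μ / (Φ : ℝ) := ⟨_, rfl⟩
  have hμ : μ = x * Φ := by rw [hx]; field_simp
  rw [← hx]
  have hkx := hk x
  generalize (Φ : ℝ) = F at *
  subst hμ
  have hF2 : 1 ≤ F ^ 2 := by rw [← sq_abs]; nlinarith
  have hs : |F| * |x + 1| ≤ Real.sqrt (1 + (x * F + F) ^ 2) := by
    rw [← abs_mul]
    apply Real.abs_le_sqrt
    nlinarith
  have hm : (2 * F ^ 2 * (1 + x ^ 2))⁻¹ ≤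
      (min (Real.sqrt (1 + F ^ 2))⁻¹ (Real.sqrt (1 + (x * F) ^ 2))⁻¹) ^ 2 := by
    rcases min_choice (Real.sqrt (1 + F ^ 2))⁻¹ (Real.sqrt (1 + (x * F) ^ 2))⁻¹ with h | h
    all_goals
      rw [h, inv_pow, Real.sq_sqrt (by positivity)]
      apply inv_anti₀ (by positivity)
      nlinarith [sq_nonneg (x * F)]
  calc ‖g x‖ / |F| ≤ (K * |x + 1| / (1 + x ^ 2)) / |F| := by
        gcongr
        rw [le_div_iff₀ (by positivity)]
        linarith
    _ = 2 * K * (|F| * |x + 1|) * (2 * F ^ 2 * (1 + x ^ 2))⁻¹ := by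
        rw [← sq_abs F]
        have : |F| ≠ 0 := by positivity
        field_simp
    _ ≤ _ := by gcongr
end

section
/- Let M ≥ 1 and let ψ: ℝ → ℂ satisfy: ψ(−1) = −1; |ψ(x)| ≤ M·⟨x⟩^{−1} for all x ∈ ℝ; and |x·ψ(x) − y·ψ(y)| ≤ M·|x−y| for all x, y ∈ ℝ. Then there exists an absolute constant C > 0 such that for every real μ with |μ| ≥ 1 and every nonzero integer Φ: |1/μ − (1/Φ)·ψ(μ/Φ)| ≤ C·M·⟨μ+Φ⟩·⟨μ⟩^{−1}·min(⟨Φ⟩^{−1}, ⟨μ⟩^{−1}). -/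
/-- The pointwise multiplier bound used in the proof of Proposition 3.3 (contribution I₃):
for `ψ` with `ψ(−1) = −1`, decay `|ψ(x)| ≤ M⟨x⟩^{−1}` and Lipschitz bound
`|xψ(x) − yψ(y)| ≤ M|x−y|`, one has
`|1/μ − (1/Φ)ψ(μ/Φ)| ≤ C M ⟨μ+Φ⟩ ⟨μ⟩^{−1} min(⟨Φ⟩^{−1}, ⟨μ⟩^{−1})` for `|μ| ≥ 1`,
with an absolute constant `C`. -/
theorem multiplier_difference_bound :
    ∃ C > 0, ∀ (M : ℝ) (ψ : ℝ → ℂ), 1 ≤ M →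
      ψ (-1) = -1 →
      (∀ x : ℝ, ‖ψ x‖ ≤ M * (Real.sqrt (1 + x ^ 2))⁻¹) →
      (∀ x y : ℝ, ‖(x : ℂ) * ψ x - (y : ℂ) * ψ y‖ ≤ M * |x - y|) →
      ∀ (μ : ℝ) (Φ : ℤ), 1 ≤ |μ| → Φ ≠ 0 →
        ‖1 / (μ : ℂ) - (1 / (Φ : ℂ)) * ψ (μ / (Φ : ℝ))‖ ≤
          C * M * Real.sqrt (1 + (μ + (Φ : ℝ)) ^ 2) * (Real.sqrt (1 + μ ^ 2))⁻¹ *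
            min (Real.sqrt (1 + (Φ : ℝ) ^ 2))⁻¹ (Real.sqrt (1 + μ ^ 2))⁻¹ := by
  refine ⟨12, by norm_num, ?_⟩
  intro M ψ hM h1 hdec hlip μ Φ hμ hΦ
  have hΦ1 : (1 : ℝ) ≤ |(Φ : ℝ)| := by
    have := Int.one_le_abs hΦ
    exact_mod_cast this
  have hμ0 : μ ≠ 0 := by
    rintro rfl
    norm_num at hμ
  have hΦ0 : (Φ : ℝ) ≠ 0 := by exact_mod_cast hΦ
  have hμc : (μ : ℂ) ≠ 0 := by exact_mod_cast hμ0
  have hΦc : (Φ : ℂ) ≠ 0 := by exact_mod_cast hΦ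
  have japan : ∀ t : ℝ, 1 ≤ |t| → Real.sqrt (1 + t ^ 2) ≤ 2 * |t| := by
    intro t ht
    apply Real.sqrt_le_iff.mpr
    refine ⟨by positivity, ?_⟩
    rw [← sq_abs t]
    nlinarith
  have hA := japan μ hμ
  have hB := japan _ hΦ1
  have hS : |μ + (Φ : ℝ)| ≤ Real.sqrt (1 + (μ + (Φ : ℝ)) ^ 2) := by
    apply Real.abs_le_sqrt
    linarith
  have hA0 : 0 < Real.sqrt (1 + μ ^ 2) := by positivity
  have hB0 : 0 < Real.sqrt (1 + (Φ : ℝ) ^ 2) := by positivity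
  have key : ∀ z : ℂ, (μ : ℂ) * (1 / (μ : ℂ) - (1 / (Φ : ℂ)) * z)
      = 1 - ((μ / (Φ : ℝ) : ℝ) : ℂ) * z := by
    intro z
    push_cast
    field_simp
  have hN : ‖1 / (μ : ℂ) - (1 / (Φ : ℂ)) * ψ (μ / (Φ : ℝ))‖ * |μ|
      = ‖1 - ((μ / (Φ : ℝ) : ℝ) : ℂ) * ψ (μ / (Φ : ℝ))‖ := by
    rw [← key, norm_mul, Complex.norm_real, Real.norm_eq_abs, mul_comm]
  have hb1 : ‖1 - ((μ / (Φ : ℝ) : ℝ) : ℂ) * ψ (μ / (Φ : ℝ))‖ * |(Φ : ℝ)|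
      ≤ M * |μ + (Φ : ℝ)| := by
    have h := hlip (-1) (μ / (Φ : ℝ))
    rw [h1] at h
    have e : (((-1 : ℝ) : ℂ)) * (-1) = 1 := by push_cast; ring
    rw [e] at h
    calc _ ≤ M * |-1 - μ / (Φ : ℝ)| * |(Φ : ℝ)| := by gcongr
      _ = M * |μ + (Φ : ℝ)| := by
        rw [mul_assoc, ← abs_mul, ← abs_neg]
        congr 2
        field_simp
        ring
  have hb2 : ‖1 - ((μ / (Φ : ℝ) : ℝ) : ℂ) * ψ (μ / (Φ : ℝ))‖ ≤ 2 * M := by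
    set x := μ / (Φ : ℝ)
    have hx : |x| ≤ Real.sqrt (1 + x ^ 2) := by
      apply Real.abs_le_sqrt
      linarith
    have hx0 : 0 < Real.sqrt (1 + x ^ 2) := by positivity
    have h3 : ‖(x : ℂ) * ψ x‖ ≤ M := by
      rw [norm_mul, Complex.norm_real, Real.norm_eq_abs]
      calc _ ≤ Real.sqrt (1 + x ^ 2) * (M * (Real.sqrt (1 + x ^ 2))⁻¹) := by
            gcongr
            exact hdec x
        _ = M := by field_simp
    have h4 := norm_sub_le (1 : ℂ) ((x : ℂ) * ψ x)
    rw [norm_one] at h4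
    linarith
  rw [← hN] at hb1 hb2
  have hn := norm_nonneg (1 / (μ : ℂ) - (1 / (Φ : ℂ)) * ψ (μ / (Φ : ℝ)))
  generalize ‖1 / (μ : ℂ) - (1 / (Φ : ℂ)) * ψ (μ / (Φ : ℝ))‖ = N at *
  have htri : |μ| ≤ |μ + (Φ : ℝ)| + |(Φ : ℝ)| := by
    have := abs_sub (μ + (Φ : ℝ)) (Φ : ℝ)
    simpa using this
  generalize Real.sqrt (1 + μ ^ 2) = A at *
  generalize Real.sqrt (1 + (Φ : ℝ) ^ 2) = B at *
  generalize Real.sqrt (1 + (μ + (Φ : ℝ)) ^ 2) = S at *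
  have hs0 := abs_nonneg (μ + (Φ : ℝ))
  have hMS : M * |μ + (Φ : ℝ)| ≤ M * S := by gcongr
  have hMS0 : 0 ≤ M * S := by
    have : 0 ≤ S := hs0.trans hS
    positivity
  have g1 : N * (A * B) ≤ 12 * M * S := by
    calc N * (A * B) ≤ N * ((2 * |μ|) * (2 * |(Φ : ℝ)|)) := by gcongr
      _ = 4 * (N * |μ| * |(Φ : ℝ)|) := by ring
      _ ≤ 12 * M * S := by linarith
  have g2 : N * (A * A) ≤ 12 * M * S := by
    have h5 : N * |μ| * |μ| ≤ N * |μ| * (|μ + (Φ : ℝ)| + |(Φ : ℝ)|) := by gcongr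
    have h6 : N * |μ| * |μ + (Φ : ℝ)| ≤ 2 * M * |μ + (Φ : ℝ)| := by gcongr
    calc N * (A * A) ≤ N * ((2 * |μ|) * (2 * |μ|)) := by gcongr
      _ = 4 * (N * |μ| * |μ|) := by ring
      _ ≤ 12 * M * S := by linarith
  rcases min_choice B⁻¹ A⁻¹ with h | h <;> rw [h, mul_assoc, ← mul_inv, ← div_eq_mul_inv]
  · rwa [le_div_iff₀ (by positivity)]
  · rwa [le_div_iff₀ (by positivity)]
end

section
/- Let g₁, g₂ be Schwartz functions on ℝ and let α > 0. There exists a constant C > 0 such that for all τ, λ ∈ ℝ and every real M ≥ 1: ∫_ℝ |g₁(τ−μ)|·|g₂(μ−λ)|·min(M^{−1}, ⟨μ⟩^{−1}) dμ ≤ C·⟨τ−λ⟩^{−α}·min(M^{−1}, ⟨λ⟩^{−1}). -/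
open MeasureTheory

lemma schwartz_decay_aux (g : SchwartzMap ℝ ℂ) (k : ℕ) :
    ∃ C > 0, ∀ x : ℝ, (1 + x ^ 2) ^ k * ‖g x‖ ≤ C := by
  have h := fun x => SchwartzMap.one_add_le_sup_seminorm_apply (𝕜 := ℝ) (m := (2 * k, 0))
    (k := 2 * k) (n := 0) le_rfl le_rfl g x
  set D := 2 ^ (2 * k) * ((Finset.Iic (2 * k, 0)).sup fun m => SchwartzMap.seminorm ℝ m.1 m.2) g
  refine ⟨|D| + 1, by positivity, fun x => ?_⟩
  have hx := h x
  rw [norm_iteratedFDeriv_zero] at hx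
  have h1 : (1 + x ^ 2) ^ k ≤ (1 + ‖x‖) ^ (2 * k) := by
    rw [pow_mul]
    apply pow_le_pow_left₀ (by positivity)
    rw [Real.norm_eq_abs]
    nlinarith [abs_nonneg x, sq_abs x]
  have h2 := mul_le_mul_of_nonneg_right h1 (norm_nonneg (g x))
  have h3 : D ≤ |D| := le_abs_self D
  exact (h2.trans hx).trans (h3.trans (by linarith))

lemma min_aux (M lam μ : ℝ) (hM : 1 ≤ M) :
    min M⁻¹ (Real.sqrt (1 + μ ^ 2))⁻¹ ≤
      2 * (1 + (μ - lam) ^ 2) * min M⁻¹ (Real.sqrt (1 + lam ^ 2))⁻¹ := by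
  have hB : 1 ≤ 1 + (μ - lam) ^ 2 := by nlinarith [sq_nonneg (μ - lam)]
  have hMi : 0 < M⁻¹ := by positivity
  rw [mul_min_of_nonneg _ _ (by positivity)]
  apply min_le_min
  · nlinarith
  · have hs : 0 < Real.sqrt (1 + μ ^ 2) := by positivity
    have hl : 0 < Real.sqrt (1 + lam ^ 2) := by positivity
    rw [← div_eq_mul_inv, inv_eq_one_div, div_le_div_iff₀ hs hl, one_mul]
    apply Real.sqrt_le_iff.2
    refine ⟨by positivity, ?_⟩
    rw [mul_pow, Real.sq_sqrt (by positivity)]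
    have h1 : 1 + lam ^ 2 ≤ 2 * (1 + (μ - lam) ^ 2) * (1 + μ ^ 2) := by
      nlinarith [sq_nonneg (2 * μ - lam), sq_nonneg (μ * (μ - lam))]
    have h2 : 2 * (1 + (μ - lam) ^ 2) ≤ (2 * (1 + (μ - lam) ^ 2)) ^ 2 := by nlinarith
    exact h1.trans (mul_le_mul_of_nonneg_right h2 (by positivity))

/-- The estimate of the contribution I in the proof of Proposition 3.2: for Schwartz `g₁, g₂`
and `α > 0`,
`∫ |g₁(τ−μ)||g₂(μ−λ)| min(M^{−1},⟨μ⟩^{−1}) dμ ≲ ⟨τ−λ⟩^{−α} min(M^{−1},⟨λ⟩^{−1})`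
uniformly in `M ≥ 1`. -/
theorem contribution_I_estimate (g₁ g₂ : SchwartzMap ℝ ℂ) (α : ℝ) (hα : 0 < α) :
    ∃ C > 0, ∀ (τ lam M : ℝ), 1 ≤ M →
      (∫ μ : ℝ, ‖g₁ (τ - μ)‖ * ‖g₂ (μ - lam)‖ * min M⁻¹ (Real.sqrt (1 + μ ^ 2))⁻¹) ≤
        C * (1 + (τ - lam) ^ 2) ^ (-(α / 2)) * min M⁻¹ (Real.sqrt (1 + lam ^ 2))⁻¹ := by
  obtain ⟨N, hN⟩ := exists_nat_ge (α / 2)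
  obtain ⟨C₁, hC₁, h₁⟩ := schwartz_decay_aux g₁ N
  obtain ⟨C₂, hC₂, h₂⟩ := schwartz_decay_aux g₂ (N + 2)
  refine ⟨C₁ * C₂ * 2 ^ N * 2 * Real.pi, by positivity, fun τ lam M hM => ?_⟩
  set m := min M⁻¹ (Real.sqrt (1 + lam ^ 2))⁻¹ with hm
  have hm0 : 0 ≤ m := le_min (by positivity) (by positivity)
  set T := 1 + (τ - lam) ^ 2 with hT
  have hT1 : 1 ≤ T := by nlinarith [sq_nonneg (τ - lam)]
  have hT0 : 0 < T := by linarith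
  set P := T ^ (-(α / 2)) with hP
  have hP0 : 0 < P := Real.rpow_pos_of_pos hT0 _
  have hTP : 1 ≤ T ^ N * P := by
    rw [hP, ← Real.rpow_natCast T N, ← Real.rpow_add hT0]
    exact Real.one_le_rpow hT1 (by linarith)
  have hint : Integrable (fun μ : ℝ => (C₁ * C₂ * 2 ^ N * 2 * P * m) * (1 + (μ - lam) ^ 2)⁻¹) :=
    (integrable_inv_one_add_sq.comp_sub_right lam).const_mul _
  have hval : ∫ μ : ℝ, (1 + (μ - lam) ^ 2)⁻¹ = Real.pi := by
    rw [integral_sub_right_eq_self (fun x : ℝ => (1 + x ^ 2)⁻¹) lam]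
    exact integral_univ_inv_one_add_sq
  calc _ ≤ ∫ μ : ℝ, (C₁ * C₂ * 2 ^ N * 2 * P * m) * (1 + (μ - lam) ^ 2)⁻¹ := by
        apply integral_mono_of_nonneg _ hint
        · refine Filter.Eventually.of_forall fun μ => ?_
          beta_reduce
          have h1 := h₁ (τ - μ)
          have h2 := h₂ (μ - lam)
          have h3 := min_aux M lam μ hM
          rw [← hm] at h3
          have hTAB : T ≤ 2 * ((1 + (τ - μ) ^ 2) * (1 + (μ - lam) ^ 2)) := by
            rw [hT]
            nlinarith [sq_nonneg ((τ - μ) - (μ - lam)), sq_nonneg ((τ - μ) * (μ - lam))]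
          have hTN := pow_le_pow_left₀ hT0.le hTAB N
          have hA : 0 < 1 + (τ - μ) ^ 2 := by positivity
          have hB : 0 < 1 + (μ - lam) ^ 2 := by positivity
          generalize 1 + (τ - μ) ^ 2 = A at *
          generalize 1 + (μ - lam) ^ 2 = B at *
          have ha := norm_nonneg (g₁ (τ - μ))
          have hb := norm_nonneg (g₂ (μ - lam))
          have hq : 0 ≤ min M⁻¹ (Real.sqrt (1 + μ ^ 2))⁻¹ := le_min (by positivity) (by positivity)
          generalize ‖g₁ (τ - μ)‖ = a at *
          generalize ‖g₂ (μ - lam)‖ = b at *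
          generalize min M⁻¹ (Real.sqrt (1 + μ ^ 2))⁻¹ = q at *
          rw [← div_eq_mul_inv, le_div_iff₀ hB]
          have hTP2 : 1 ≤ (2 * (A * B)) ^ N * P :=
            hTP.trans (mul_le_mul_of_nonneg_right hTN hP0.le)
          calc a * b * q * B ≤ a * b * (2 * B * m) * B := by gcongr
            _ = (a * b * (2 * B * m) * B) * 1 := by ring
            _ ≤ (a * b * (2 * B * m) * B) * ((2 * (A * B)) ^ N * P) := by gcongr
            _ = (A ^ N * a) * (B ^ (N + 2) * b) * (2 ^ N * 2 * P * m) := by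
                rw [mul_pow, mul_pow]; ring
            _ ≤ C₁ * C₂ * (2 ^ N * 2 * P * m) := by gcongr
            _ = _ := by ring
        · refine Filter.Eventually.of_forall fun μ => ?_
          have : 0 ≤ min M⁻¹ (Real.sqrt (1 + μ ^ 2))⁻¹ := le_min (by positivity) (by positivity)
          show 0 ≤ _
          positivity
    _ = _ := by
        rw [integral_const_mul, hval]; ring
end

section
/- Let g, h be Schwartz functions on ℝ. There exists a constant C > 0 such that for all τ, λ ∈ ℝ and every real Φ with |Φ| ≥ 1: ∫_ℝ |g(τ−μ)|·|h(μ/Φ)|·(⟨Φ⟩·⟨μ−λ⟩)^{−1} dμ ≤ C·⟨τ−λ⟩^{−1}·min(⟨Φ⟩^{−1}, ⟨τ⟩^{−1}). -/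
open MeasureTheory

lemma aux_peetre (x y z : ℝ) (hz : z = x + y) :
    Real.sqrt (1 + z ^ 2) ≤ 2 * Real.sqrt (1 + x ^ 2) * Real.sqrt (1 + y ^ 2) := by
  subst hz
  rw [mul_assoc, ← Real.sqrt_mul (by positivity)]
  apply Real.sqrt_le_iff.2
  refine ⟨by positivity, ?_⟩
  rw [mul_pow, Real.sq_sqrt (by positivity)]
  nlinarith [sq_nonneg (x - y), sq_nonneg (x * y), sq_nonneg x, sq_nonneg y]

lemma aux_scale (μ Φ : ℝ) (hΦ : Φ ≠ 0) :
    Real.sqrt (1 + μ ^ 2) ≤ Real.sqrt (1 + Φ ^ 2) * Real.sqrt (1 + (μ / Φ) ^ 2) := by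
  rw [← Real.sqrt_mul (by positivity)]
  apply Real.sqrt_le_sqrt
  have : μ = Φ * (μ / Φ) := by field_simp
  have h2 : μ ^ 2 = Φ ^ 2 * (μ / Φ) ^ 2 := by rw [← mul_pow, ← this]
  nlinarith [sq_nonneg Φ, sq_nonneg (μ / Φ)]

lemma aux_decay (h : SchwartzMap ℝ ℂ) :
    ∃ H > 0, ∀ x : ℝ, ‖h x‖ * Real.sqrt (1 + x ^ 2) ≤ H := by
  obtain ⟨C0, h0, hC0⟩ := h.decay 0 0
  obtain ⟨C1, h1, hC1⟩ := h.decay 1 0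
  refine ⟨C0 + C1, by positivity, fun x => ?_⟩
  have e0 := hC0 x
  have e1 := hC1 x
  simp only [norm_iteratedFDeriv_zero, pow_zero, pow_one, one_mul, Real.norm_eq_abs] at e0 e1
  have : Real.sqrt (1 + x ^ 2) ≤ 1 + |x| := by
    apply Real.sqrt_le_iff.2
    refine ⟨by positivity, ?_⟩
    nlinarith [sq_abs x, abs_nonneg x]
  nlinarith [mul_le_mul_of_nonneg_left this (norm_nonneg (h x))]

lemma aux_int (g : SchwartzMap ℝ ℂ) :
    Integrable (fun x : ℝ => ‖g x‖ * (1 + x ^ 2)) := by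
  have a := g.integrable_pow_mul volume 0
  have b := g.integrable_pow_mul volume 2
  refine (a.add b).congr (Filter.Eventually.of_forall fun x => ?_)
  simp
  ring

/-- The estimate of the contribution II in the proof of Proposition 3.2: for Schwartz `g, h`,
`∫ |g(τ−μ)||h(μ/Φ)| (⟨Φ⟩⟨μ−λ⟩)^{−1} dμ ≲ ⟨τ−λ⟩^{−1} min(⟨Φ⟩^{−1},⟨τ⟩^{−1})`
uniformly over `|Φ| ≥ 1`. -/
theorem contribution_II_estimate (g h : SchwartzMap ℝ ℂ) :
    ∃ C > 0, ∀ (τ lam Φ : ℝ), 1 ≤ |Φ| →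
      (∫ μ : ℝ, ‖g (τ - μ)‖ * ‖h (μ / Φ)‖ *
          (Real.sqrt (1 + Φ ^ 2) * Real.sqrt (1 + (μ - lam) ^ 2))⁻¹) ≤
        C * (Real.sqrt (1 + (τ - lam) ^ 2))⁻¹ *
          min (Real.sqrt (1 + Φ ^ 2))⁻¹ (Real.sqrt (1 + τ ^ 2))⁻¹ := by
  obtain ⟨H, hH, hb⟩ := aux_decay h
  have hG0 : 0 ≤ ∫ x : ℝ, ‖g x‖ * (1 + x ^ 2) := integral_nonneg fun x => by positivity
  refine ⟨8 * H * (∫ x : ℝ, ‖g x‖ * (1 + x ^ 2)) + 1, by positivity, fun τ lam Φ hΦ => ?_⟩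
  have hΦ0 : Φ ≠ 0 := by
    rintro rfl
    norm_num at hΦ
  have J1 : ∀ x : ℝ, 1 ≤ Real.sqrt (1 + x ^ 2) := fun x => by
    rw [Real.one_le_sqrt]; nlinarith [sq_nonneg x]
  have Jp : ∀ x : ℝ, 0 < Real.sqrt (1 + x ^ 2) := fun x => one_pos.trans_le (J1 x)
  set M := min (Real.sqrt (1 + Φ ^ 2))⁻¹ (Real.sqrt (1 + τ ^ 2))⁻¹ with hM
  have hM0 : 0 ≤ M := le_min (by positivity) (by positivity)
  set c := Real.sqrt (1 + (τ - lam) ^ 2) with hc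
  have hc0 : 0 < c := Jp _
  have key : ∀ μ : ℝ, ‖g (τ - μ)‖ * ‖h (μ / Φ)‖ *
          (Real.sqrt (1 + Φ ^ 2) * Real.sqrt (1 + (μ - lam) ^ 2))⁻¹ ≤
      (‖g (τ - μ)‖ * (1 + (τ - μ) ^ 2)) * (8 * H * c⁻¹ * M) := by
    intro μ
    have i1 := aux_peetre (τ - μ) (μ - lam) (τ - lam) (by ring)
    have i2 := aux_peetre (τ - μ) μ τ (by ring)
    have i3 := aux_scale μ Φ hΦ0
    have i4 := hb (μ / Φ)
    have hbb : Real.sqrt (1 + (τ - μ) ^ 2) ^ 2 = 1 + (τ - μ) ^ 2 := Real.sq_sqrt (by positivity)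
    rw [← hbb]
    have b1 := J1 (τ - μ)
    have q1 := J1 (μ / Φ)
    have a0 := Jp (μ - lam)
    have p0 := Jp Φ
    have t0 := Jp τ
    rw [← hc] at i1
    generalize Real.sqrt (1 + (τ - μ) ^ 2) = b at *
    generalize Real.sqrt (1 + (μ / Φ) ^ 2) = q at *
    generalize Real.sqrt (1 + (μ - lam) ^ 2) = a at *
    generalize Real.sqrt (1 + Φ ^ 2) = p at *
    generalize Real.sqrt (1 + τ ^ 2) = t at *
    generalize Real.sqrt (1 + μ ^ 2) = m at *
    have n0 : 0 ≤ ‖h (μ / Φ)‖ := norm_nonneg _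
    generalize ‖h (μ / Φ)‖ = η at *
    have b0 : 0 < b := by linarith
    have s1 : a⁻¹ ≤ 2 * b * c⁻¹ := by
      rw [← div_eq_mul_inv, le_div_iff₀ hc0, inv_mul_le_iff₀ a0]; linarith
    have hη : η ≤ H := by nlinarith
    have s2 : η * p⁻¹ ≤ 2 * H * b * M := by
      rw [hM, mul_min_of_nonneg _ _ (by positivity)]
      apply le_min
      · gcongr
        nlinarith
      · rw [← div_eq_mul_inv, ← div_eq_mul_inv, div_le_div_iff₀ p0 t0]
        calc η * t ≤ η * (2 * b * (p * q)) := by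
              gcongr
              exact i2.trans (by gcongr)
          _ = (η * q) * (2 * b * p) := by ring
          _ ≤ H * (2 * b * p) := by gcongr
          _ = _ := by ring
    calc _ = ‖g (τ - μ)‖ * ((η * p⁻¹) * a⁻¹) := by rw [mul_inv]; ring
      _ ≤ ‖g (τ - μ)‖ * ((2 * H * b * M) * (2 * b * c⁻¹)) := by gcongr
      _ = (‖g (τ - μ)‖ * b ^ 2 * (H * c⁻¹ * M)) * 4 := by ring
      _ ≤ (‖g (τ - μ)‖ * b ^ 2 * (H * c⁻¹ * M)) * 8 := by gcongr; norm_num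
      _ = _ := by ring
  have hint : Integrable (fun μ : ℝ => (‖g (τ - μ)‖ * (1 + (τ - μ) ^ 2)) * (8 * H * c⁻¹ * M)) :=
    ((aux_int g).comp_sub_left τ).mul_const _
  have := integral_mono_of_nonneg (μ := volume)
    (Filter.Eventually.of_forall fun μ => by positivity) hint (Filter.Eventually.of_forall key)
  refine this.trans ?_
  rw [integral_mul_const, integral_sub_left_eq_self (fun x : ℝ => ‖g x‖ * (1 + x ^ 2)) volume τ]
  have : 0 ≤ c⁻¹ * M := by positivity
  nlinarith
end

section
/- For every ε with 0 < ε < 1 there exists a constant C > 0 such that for every integer n, every nonzero integer μ with |n| ≥ |μ|^ε, and all reals N₂, N₃ ≥ 1, the number of pairs (n₂, n₃) ∈ ℤ² satisfying 3·(n−n₂)·(n−n₃)·(n₂+n₃) = μ, |n₂| ≤ N₂ and |n₃| ≤ N₃ is at most C·(N₂·N₃)^ε. -/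
lemma aux_divisor_bound (δ : ℝ) (hδ : 0 < δ) :
    ∃ C : ℝ, 1 ≤ C ∧ ∀ m : ℕ, m ≠ 0 → (m.divisors.card : ℝ) ≤ C * (m : ℝ) ^ δ := by
  obtain ⟨P, hP⟩ : ∃ P : ℕ, ∀ p : ℕ, P ≤ p → (2 : ℝ) ≤ (p : ℝ) ^ δ := by
    have h := (tendsto_rpow_atTop hδ).comp (tendsto_natCast_atTop_atTop (R := ℝ))
    have h2 := h.eventually_ge_atTop 2
    obtain ⟨P, hP⟩ := Filter.eventually_atTop.1 h2
    exact ⟨P, fun p hp => hP p hp⟩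
  have hl : 0 < δ * Real.log 2 := mul_pos hδ (Real.log_pos (by norm_num))
  set K : ℝ := max 1 (1 / (δ * Real.log 2)) with hK
  have hK1 : 1 ≤ K := le_max_left _ _
  have hK2 : 1 ≤ K * (δ * Real.log 2) := by
    have : 1 / (δ * Real.log 2) ≤ K := le_max_right _ _
    rwa [div_le_iff₀ hl] at this
  refine ⟨K ^ P, one_le_pow₀ hK1, fun m hm => ?_⟩
  have key : ∀ p : ℕ, p.Prime → ∀ a : ℕ,
      ((a + 1 : ℕ) : ℝ) ≤ (if p < P then K else 1) * ((p : ℝ) ^ δ) ^ a := by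
    intro p hp a
    split_ifs with h
    · have h2p : (2 : ℝ) ≤ p := by exact_mod_cast hp.two_le
      have h1 : ((2 : ℝ) ^ δ) ^ a ≤ ((p : ℝ) ^ δ) ^ a := by gcongr
      have h3 : ((2 : ℝ) ^ δ) ^ a = Real.exp (a * (δ * Real.log 2)) := by
        rw [Real.rpow_def_of_pos (by norm_num), ← Real.exp_nat_mul, mul_comm δ]
      have h4 := Real.add_one_le_exp (a * (δ * Real.log 2))
      rw [h3] at h1
      have ha : (0 : ℝ) ≤ a := by positivity
      push_cast
      calc (a : ℝ) + 1 ≤ a * (K * (δ * Real.log 2)) + K := by nlinarith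
        _ = K * (a * (δ * Real.log 2) + 1) := by ring
        _ ≤ _ := by
          apply mul_le_mul_of_nonneg_left (h4.trans h1) (by linarith)
    · have h2 := hP p (not_lt.1 h)
      rw [one_mul]
      have h1 : (2 : ℝ) ^ a ≤ ((p : ℝ) ^ δ) ^ a := by gcongr
      have h3 : a + 1 ≤ 2 ^ a := Nat.lt_two_pow_self
      have h4 : ((a + 1 : ℕ) : ℝ) ≤ 2 ^ a := by exact_mod_cast h3
      exact h4.trans h1
  have hm2 : (m : ℝ) ^ δ = ∏ p ∈ m.primeFactors, ((p : ℝ) ^ δ) ^ (m.factorization p) := by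
    conv_lhs => rw [← Nat.prod_factorization_pow_eq_self hm]
    rw [Finsupp.prod, Nat.support_factorization]
    push_cast
    rw [← Real.finsetProd_rpow _ _ (fun i _ => by positivity)]
    refine Finset.prod_congr rfl fun p _ => ?_
    rw [← Real.rpow_natCast, ← Real.rpow_natCast, ← Real.rpow_mul (by positivity),
      ← Real.rpow_mul (by positivity), mul_comm]
  rw [Nat.card_divisors hm, hm2, Nat.cast_prod]
  calc _ ≤ ∏ p ∈ m.primeFactors,
        ((if p < P then K else 1) * ((p : ℝ) ^ δ) ^ (m.factorization p)) := by
        refine Finset.prod_le_prod (fun _ _ => by positivity) fun p hp => ?_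
        exact key p (Nat.prime_of_mem_primeFactors hp) _
    _ = (∏ p ∈ m.primeFactors, (if p < P then K else 1)) *
        ∏ p ∈ m.primeFactors, ((p : ℝ) ^ δ) ^ (m.factorization p) := Finset.prod_mul_distrib
    _ ≤ _ := by
        refine mul_le_mul_of_nonneg_right ?_ (Finset.prod_nonneg fun _ _ => by positivity)
        rw [← Finset.prod_filter, Finset.prod_const]
        refine pow_le_pow_right₀ hK1 ?_
        calc _ ≤ (Finset.range P).card := Finset.card_le_card (fun p hp => by
              simp at hp ⊢; exact hp.2)
          _ = P := Finset.card_range P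

lemma aux_gcd_prod (a : ℕ) (f : ℤ → ℕ) (S : Finset ℤ) :
    Nat.gcd a (∏ s ∈ S, f s) ∣ ∏ s ∈ S, Nat.gcd a (f s) := by
  induction S using Finset.induction_on with
  | empty => simp
  | insert b S hb ih =>
    rw [Finset.prod_insert hb, Finset.prod_insert hb]
    exact (Nat.gcd_mul_right_dvd_mul_gcd a _ _).trans (mul_dvd_mul_left _ ih)

lemma aux_lcm (μ : ℤ) (M : ℝ) (hM : 1 ≤ M) (S : Finset ℤ)
    (h0 : ∀ d ∈ S, d ≠ 0) (hd : ∀ d ∈ S, d ∣ μ)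
    (hS : ∀ a ∈ S, ∀ b ∈ S, (|((a - b : ℤ) : ℝ)|) ≤ M) :
    ∃ l : ℕ, l ∣ μ.natAbs ∧ l ∣ ∏ s ∈ S, s.natAbs ∧
      ((∏ s ∈ S, s.natAbs : ℕ) : ℝ) ≤ l * M ^ (S.card ^ 2) := by
  induction S using Finset.induction_on with
  | empty => exact ⟨1, by simp⟩
  | insert a S ha ih =>
    obtain ⟨l, h1, h2, h3⟩ := ih (fun d h => h0 d (Finset.mem_insert_of_mem h))
      (fun d h => hd d (Finset.mem_insert_of_mem h))
      (fun x hx y hy => hS x (Finset.mem_insert_of_mem hx) y (Finset.mem_insert_of_mem hy))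
    refine ⟨Nat.lcm a.natAbs l, ?_, ?_, ?_⟩
    · exact Nat.lcm_dvd (Int.natAbs_dvd_natAbs.2 (hd a (Finset.mem_insert_self _ _))) h1
    · rw [Finset.prod_insert ha]
      exact (Nat.lcm_dvd_mul _ _).trans (mul_dvd_mul_left _ h2)
    · have hg : Nat.gcd a.natAbs l ∣ ∏ s ∈ S, Nat.gcd a.natAbs s.natAbs :=
        (Nat.gcd_dvd_gcd_of_dvd_right _ h2).trans (aux_gcd_prod _ _ _)
      have ha0 : 0 < a.natAbs := Int.natAbs_pos.2 (h0 a (Finset.mem_insert_self _ _))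
      have hg1 : Nat.gcd a.natAbs l ≤ ∏ s ∈ S, Nat.gcd a.natAbs s.natAbs :=
        Nat.le_of_dvd (Finset.prod_pos fun s _ => Nat.gcd_pos_of_pos_left _ ha0) hg
      have hg2 : ((∏ s ∈ S, Nat.gcd a.natAbs s.natAbs : ℕ) : ℝ) ≤ M ^ S.card := by
        rw [Nat.cast_prod, ← Finset.prod_const]
        refine Finset.prod_le_prod (fun _ _ => by positivity) fun s hs => ?_
        have hne : a - s ≠ 0 := by
          intro h
          have : a = s := by omega
          exact ha (this ▸ hs)
        have hdv : Nat.gcd a.natAbs s.natAbs ∣ (a - s).natAbs := by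
          have h : ((Int.gcd a s : ℕ) : ℤ) ∣ a - s :=
            dvd_sub (Int.gcd_dvd_left ..) (Int.gcd_dvd_right ..)
          exact Int.natCast_dvd.1 h
        have hle := Nat.le_of_dvd (Int.natAbs_pos.2 hne) hdv
        have h5 := hS a (Finset.mem_insert_self _ _) s (Finset.mem_insert_of_mem hs)
        rw [← Int.cast_abs, ← Nat.cast_natAbs] at h5
        exact le_trans (by exact_mod_cast hle) h5
      have hg3 : ((Nat.gcd a.natAbs l : ℕ) : ℝ) ≤ M ^ S.card :=
        le_trans (by exact_mod_cast hg1) hg2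
      have hmul : ((Nat.gcd a.natAbs l : ℕ) : ℝ) * (Nat.lcm a.natAbs l : ℕ)
          = (a.natAbs : ℝ) * l := by
        exact_mod_cast Nat.gcd_mul_lcm a.natAbs l
      rw [Finset.prod_insert ha, Finset.card_insert_of_notMem ha, Nat.cast_mul]
      calc (a.natAbs : ℝ) * ((∏ s ∈ S, s.natAbs : ℕ) : ℝ)
          ≤ (a.natAbs : ℝ) * (l * M ^ (S.card ^ 2)) := by gcongr
        _ = ((Nat.gcd a.natAbs l : ℕ) : ℝ) * (Nat.lcm a.natAbs l : ℕ) * M ^ (S.card ^ 2) := by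
            rw [hmul]; ring
        _ ≤ M ^ S.card * (Nat.lcm a.natAbs l : ℕ) * M ^ (S.card ^ 2) := by gcongr
        _ = (Nat.lcm a.natAbs l : ℕ) * M ^ (S.card ^ 2 + S.card) := by rw [pow_add]; ring
        _ ≤ _ := by
            gcongr
            · nlinarith

lemma aux_card_divisors_int (μ : ℤ) (hμ : μ ≠ 0) (S : Finset ℤ) (hd : ∀ d ∈ S, d ∣ μ) :
    S.card ≤ 2 * μ.natAbs.divisors.card := by
  have : S ⊆ μ.natAbs.divisors.image (fun d : ℕ => (d : ℤ)) ∪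
      μ.natAbs.divisors.image (fun d : ℕ => -(d : ℤ)) := by
    intro d h
    have h1 : d.natAbs ∈ μ.natAbs.divisors := by
      simpa [Nat.mem_divisors, hμ] using Int.natAbs_dvd_natAbs.2 (hd d h)
    simp only [Finset.mem_union, Finset.mem_image]
    rcases Int.natAbs_eq d with h2 | h2
    · exact Or.inl ⟨_, h1, h2.symm⟩
    · exact Or.inr ⟨_, h1, h2.symm⟩
  have h := (Finset.card_le_card this).trans (Finset.card_union_le _ _)
  have h1 := Finset.card_image_le (s := μ.natAbs.divisors) (f := fun d : ℕ => (d : ℤ))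
  have h2 := Finset.card_image_le (s := μ.natAbs.divisors) (f := fun d : ℕ => -(d : ℤ))
  omega

lemma aux_near (ε : ℝ) (hε0 : 0 < ε) (hε1 : ε < 1) :
    ∃ C : ℝ, 0 < C ∧ ∀ (n μ : ℤ), μ ≠ 0 → |(μ : ℝ)| ^ ε ≤ |(n : ℝ)| →
      ∀ N : ℝ, 1 ≤ N → ∀ S : Finset ℤ, (∀ d ∈ S, d ∣ μ) →
        (∀ d ∈ S, |(n : ℝ) - d| ≤ N) → (S.card : ℝ) ≤ C * N ^ ε := by
  obtain ⟨m, hm⟩ := exists_nat_ge (1 / ε)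
  obtain ⟨k, hk⟩ : ∃ k, k = m + 1 := ⟨_, rfl⟩
  obtain ⟨J, hJ⟩ : ∃ J, J = k ^ 2 + k := ⟨_, rfl⟩
  have hJ0 : J ≠ 0 := by rw [hJ, hk]; positivity
  have hJr : (J : ℝ) ≠ 0 := by exact_mod_cast hJ0
  have hJpos : (0 : ℝ) < J := by positivity
  obtain ⟨C, hC1, hC⟩ := aux_divisor_bound (ε * (ε / J)) (by positivity)
  refine ⟨4 * C + k, by positivity, fun n μ hμ hn N hN S hd hS => ?_⟩
  set x : ℝ := |(n : ℝ)| with hx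
  have hμ1 : (1 : ℝ) ≤ |(μ : ℝ)| := by
    exact_mod_cast Int.one_le_abs hμ
  have hx1 : 1 ≤ x := le_trans (Real.one_le_rpow hμ1 hε0.le) hn
  have hNε : 1 ≤ N ^ ε := Real.one_le_rpow hN hε0.le
  have hk0 : (0 : ℝ) ≤ k := by positivity
  by_cases hA : x ≤ (2 * N) ^ J
  · have h1 : (S.card : ℝ) ≤ 2 * (μ.natAbs.divisors.card : ℝ) := by
      exact_mod_cast aux_card_divisors_int μ hμ S hd
    have h2 := hC μ.natAbs (Int.natAbs_ne_zero.2 hμ)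
    rw [Nat.cast_natAbs, Int.cast_abs] at h2
    have h3 : |(μ : ℝ)| ^ (ε * (ε / J)) ≤ 2 * N ^ ε := by
      calc |(μ : ℝ)| ^ (ε * (ε / J)) = (|(μ : ℝ)| ^ ε) ^ (ε / J) :=
            Real.rpow_mul (by positivity) _ _
        _ ≤ ((2 * N) ^ J) ^ (ε / J) := by
            apply Real.rpow_le_rpow (by positivity) (hn.trans hA) (by positivity)
        _ = (2 * N) ^ ε := by
            rw [← Real.rpow_natCast, ← Real.rpow_mul (by positivity)]
            congr 1; field_simp
        _ = 2 ^ ε * N ^ ε := Real.mul_rpow (by norm_num) (by linarith)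
        _ ≤ 2 * N ^ ε := by
            gcongr
            calc (2 : ℝ) ^ ε ≤ 2 ^ (1 : ℝ) :=
                  Real.rpow_le_rpow_of_exponent_le (by norm_num) hε1.le
              _ = 2 := by norm_num
    have h4 : C * |(μ : ℝ)| ^ (ε * (ε / J)) ≤ C * (2 * N ^ ε) := by gcongr
    nlinarith
  · push Not at hA
    have hlt : S.card < k := by
      by_contra hcon
      push Not at hcon
      obtain ⟨T, hTS, hT⟩ := Finset.exists_subset_card_eq hcon
      have h2N : 2 * N < x := lt_of_le_of_lt (le_self_pow₀ (by linarith) hJ0) hA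
      have hlow : ∀ d ∈ T, x / (2 * N) ≤ (d.natAbs : ℝ) := by
        intro d hdT
        have h1 := hS d (hTS hdT)
        have h2 : x - |(d : ℝ)| ≤ |(n : ℝ) - d| := abs_sub_abs_le_abs_sub _ _
        rw [Nat.cast_natAbs, Int.cast_abs]
        rw [div_le_iff₀ (by linarith)]
        have h3 : x / 2 ≤ |(d : ℝ)| := by linarith
        nlinarith
      obtain ⟨l, hl1, -, hl3⟩ := aux_lcm μ (2 * N) (by linarith) T
        (fun d h h0 => by
          have h1 := hlow d h
          rw [h0] at h1
          have : 0 < x / (2 * N) := by positivity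
          simp at h1; linarith)
        (fun d h => hd d (hTS h))
        (fun a ha b hb => by
          have h1 := hS a (hTS ha)
          have h2 := hS b (hTS hb)
          rw [abs_le] at *
          push_cast
          constructor <;> linarith [h1.1, h1.2, h2.1, h2.2])
      have hlμ : (l : ℝ) ≤ |(μ : ℝ)| := by
        have := Nat.le_of_dvd (Int.natAbs_pos.2 hμ) hl1
        rw [← Int.cast_abs, ← Nat.cast_natAbs]
        exact_mod_cast this
      have hμx : |(μ : ℝ)| ≤ x ^ m := by
        calc |(μ : ℝ)| = (|(μ : ℝ)| ^ ε) ^ (1 / ε) := by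
              rw [← Real.rpow_mul (by positivity), mul_one_div_cancel hε0.ne', Real.rpow_one]
          _ ≤ x ^ (1 / ε) := Real.rpow_le_rpow (by positivity) hn (by positivity)
          _ ≤ x ^ (m : ℝ) := Real.rpow_le_rpow_of_exponent_le hx1 hm
          _ = x ^ m := Real.rpow_natCast _ _
      have hprod : (x / (2 * N)) ^ k ≤ ((∏ s ∈ T, s.natAbs : ℕ) : ℝ) := by
        rw [Nat.cast_prod, ← hT, ← Finset.prod_const]
        exact Finset.prod_le_prod (fun _ _ => by positivity) hlow
      rw [hT] at hl3
      have h5 : (x / (2 * N)) ^ k ≤ x ^ m * (2 * N) ^ (k ^ 2) :=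
        (hprod.trans hl3).trans (by gcongr; exact hlμ.trans hμx)
      rw [div_pow, div_le_iff₀ (by positivity), mul_assoc, ← pow_add, ← hJ] at h5
      rw [hk, pow_succ] at h5
      have h6 : 0 < x ^ m := by positivity
      exact absurd (le_of_mul_le_mul_left h5 h6) (not_le.2 hA)
    have : (S.card : ℝ) ≤ k := by exact_mod_cast hlt.le
    have h7 : (k : ℝ) ≤ k * N ^ ε := le_mul_of_one_le_right hk0 hNε
    have h8 : 0 ≤ C * N ^ ε := by positivity
    nlinarith


/-- The counting bound `|X_*^μ(n)| ≲ (N₂N₃)^ε` for level sets of the resonance function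
`3(n−n₂)(n−n₃)(n₂+n₃)` in the region `X_A`, used in the proof of Lemma 5.1. -/
theorem resonance_level_set_count (ε : ℝ) (hε0 : 0 < ε) (hε1 : ε < 1) :
    ∃ C > 0, ∀ (n μ : ℤ), μ ≠ 0 → (|μ| : ℝ) ^ ε ≤ (|n| : ℝ) →
      ∀ (N₂ N₃ : ℝ), 1 ≤ N₂ → 1 ≤ N₃ →
        {p : ℤ × ℤ | 3 * (n - p.1) * (n - p.2) * (p.1 + p.2) = μ ∧
          (|p.1| : ℝ) ≤ N₂ ∧ (|p.2| : ℝ) ≤ N₃}.Finite ∧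
        (({p : ℤ × ℤ | 3 * (n - p.1) * (n - p.2) * (p.1 + p.2) = μ ∧
          (|p.1| : ℝ) ≤ N₂ ∧ (|p.2| : ℝ) ≤ N₃}.ncard : ℝ) ≤ C * (N₂ * N₃) ^ ε) := by
  obtain ⟨C, hC0, hC⟩ := aux_near ε hε0 hε1
  refine ⟨C * C, by positivity, fun n μ hμ hn N₂ N₃ h2 h3 => ?_⟩
  let D : ℝ → Finset ℤ := fun N =>
    (Finset.Icc (-⌊N⌋) ⌊N⌋).filter (fun a => (n - a) ∣ μ)
  have hmem : ∀ (N : ℝ) (a : ℤ), |(a : ℝ)| ≤ N → (n - a) ∣ μ → a ∈ D N := by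
    intro N a ha hd
    simp only [D, Finset.mem_filter, Finset.mem_Icc]
    have h : |a| ≤ ⌊N⌋ := Int.le_floor.2 (by push_cast; exact ha)
    exact ⟨abs_le.1 h, hd⟩
  have hcard : ∀ N : ℝ, 1 ≤ N → ((D N).card : ℝ) ≤ C * N ^ ε := by
    intro N hN
    have h := hC n μ hμ hn N hN ((D N).image (fun a => n - a))
      (by
        intro d hd
        obtain ⟨a, ha, rfl⟩ := Finset.mem_image.1 hd
        exact (Finset.mem_filter.1 ha).2)
      (by
        intro d hd
        obtain ⟨a, ha, rfl⟩ := Finset.mem_image.1 hd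
        have h1 := Finset.mem_Icc.1 (Finset.mem_filter.1 ha).1
        have h4 : |a| ≤ ⌊N⌋ := abs_le.2 h1
        have h5 := Int.le_floor.1 h4
        push_cast at h5 ⊢
        simpa using h5)
    rwa [Finset.card_image_of_injective _ (sub_right_injective)] at h
  have hsub : {p : ℤ × ℤ | 3 * (n - p.1) * (n - p.2) * (p.1 + p.2) = μ ∧
          (|p.1| : ℝ) ≤ N₂ ∧ (|p.2| : ℝ) ≤ N₃} ⊆ ((D N₂ ×ˢ D N₃ : Finset (ℤ × ℤ)) : Set (ℤ × ℤ)) := by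
    rintro ⟨a, b⟩ ⟨h, ha, hb⟩
    simp only at h ha hb
    rw [Finset.mem_coe, Finset.mem_product]
    exact ⟨hmem _ _ ha ⟨3 * (n - b) * (a + b), by rw [← h]; ring⟩,
      hmem _ _ hb ⟨3 * (n - a) * (a + b), by rw [← h]; ring⟩⟩
  refine ⟨(Finset.finite_toSet _).subset hsub, ?_⟩
  have hle := Set.ncard_le_ncard hsub (Finset.finite_toSet _)
  rw [Set.ncard_coe_finset, Finset.card_product] at hle
  calc _ ≤ (((D N₂).card * (D N₃).card : ℕ) : ℝ) := by exact_mod_cast hle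
    _ = ((D N₂).card : ℝ) * (D N₃).card := by push_cast; ring
    _ ≤ (C * N₂ ^ ε) * (C * N₃ ^ ε) :=
        mul_le_mul (hcard _ h2) (hcard _ h3) (by positivity) (by positivity)
    _ = _ := by rw [Real.mul_rpow (by linarith) (by linarith)]; ring
end
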